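/- Under the zero-loss hypothesis, all four inclusions in the commutative square TP ↪ F_ε(P) ↪ F_ε(P) ∪ F_{2ε}(G) and TP ↪ F_{2ε}(G) ↪ F_ε(P) ∪ F_{2ε}(G) are deformation retractions; that is: F_ε(P) strongly deformation retracts onto TP; F_{2ε}(G) strongly deformation retracts onto TP; F_ε(P) ∪ F_{2ε}(G) strongly deformation retracts onto F_ε(P); and F_ε(P) ∪ F_{2ε}(G) strongly deformation retracts onto F_{2ε}(G). -/

import Mathlib

open Set Metric

noncomputable section

/-- The plane modeled as `Fin 2 → ℝ` with the Pi (sup) norm. -/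
abbrev Plane : Type := Fin 2 → ℝ

/-- The Euclidean plane (for Euclidean-norm disks and annuli). -/
abbrev EPlane : Type := EuclideanSpace ℝ (Fin 2)

/-- The closed unit pixel `[i-1,i] × [j-1,j]` for a pixel index `(i,j)`. -/
def pixel (p : ℕ × ℕ) : Set Plane :=
  {x | x 0 ∈ Set.Icc ((p.1 : ℝ) - 1) (p.1 : ℝ) ∧ x 1 ∈ Set.Icc ((p.2 : ℝ) - 1) (p.2 : ℝ)}

/-- A binary image `S` lies on the `h × w` grid `{1,…,h} × {1,…,w}`. -/
def OnGrid (S : Set (ℕ × ℕ)) (h w : ℕ) : Prop :=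
  S ⊆ Set.Icc 1 h ×ˢ Set.Icc 1 w

/-- The foreground `F(S)` of a binary image. -/
def fg (S : Set (ℕ × ℕ)) : Set Plane := ⋃ p ∈ S, pixel p

/-- Closed `ε`-thickening `D_ε(X)` with respect to the sup norm. -/
def thick (ε : ℝ) (X : Set Plane) : Set Plane := {y | ∃ x ∈ X, ‖x - y‖ ≤ ε}

/-- `C` is a connected component of `A` (as a subset of the plane). -/
def IsCompOf (C A : Set Plane) : Prop := ∃ x ∈ A, C = connectedComponentIn A x

/-- Two subsets share a boundary edge if their closures intersect in an infinite set. -/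
def SharesEdge (C D : Set Plane) : Prop := (closure C ∩ closure D).Infinite

/-- `X` strongly deformation retracts onto `A`. -/
def SDR (X A : Set Plane) : Prop :=
  ∃ H : C(↥X × unitInterval, ↥X),
    (∀ x, H (x, 0) = x) ∧ (∀ x, ((H (x, 1) : Plane)) ∈ A) ∧
    (∀ a : ↥X, (a : Plane) ∈ A → ∀ t, H (a, t) = a)

def TPset (P G : Set (ℕ × ℕ)) (ε : ℝ) : Set Plane := thick ε (fg P) ∩ thick (2 * ε) (fg G)
def TNset (P G : Set (ℕ × ℕ)) (ε : ℝ) : Set Plane := (thick ε (fg P))ᶜ ∩ (thick (2 * ε) (fg G))ᶜ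
def FPset (P G : Set (ℕ × ℕ)) (ε : ℝ) : Set Plane := thick ε (fg P) ∩ (thick (2 * ε) (fg G))ᶜ
def FNset (P G : Set (ℕ × ℕ)) (ε : ℝ) : Set Plane := (thick ε (fg P))ᶜ ∩ thick (2 * ε) (fg G)

/-- A component `C` (of `FP` or `FN`) is regular: exactly one component of `TP` and exactly
one component of `TN` share a boundary edge with it. -/
def RegularComp (P G : Set (ℕ × ℕ)) (ε : ℝ) (C : Set Plane) : Prop :=
  (∃! T : Set Plane, IsCompOf T (TPset P G ε) ∧ SharesEdge T C) ∧
  (∃! T : Set Plane, IsCompOf T (TNset P G ε) ∧ SharesEdge T C)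

/-- The zero-loss hypothesis: every component of `FP` and every component of `FN` is regular. -/
def ZeroLoss (P G : Set (ℕ × ℕ)) (ε : ℝ) : Prop :=
  (∀ C : Set Plane, IsCompOf C (FPset P G ε) → RegularComp P G ε C) ∧
  (∀ C : Set Plane, IsCompOf C (FNset P G ε) → RegularComp P G ε C)

namespace ZL

abbrev Cell : Type := ℤ × ℤ

/-- one dimensional incidence: `m'` is a coface of `m` -/
def I1 (m m' : ℤ) : Prop := m' = m ∨ (m % 2 = 0 ∧ (m' = m + 1 ∨ m' = m - 1))

def Le (s t : Cell) : Prop := I1 s.1 t.1 ∧ I1 s.2 t.2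

def Vtx (s : Cell) : Prop := s.1 % 2 = 0 ∧ s.2 % 2 = 0
def Sq (s : Cell) : Prop := s.1 % 2 = 1 ∧ s.2 % 2 = 1
def Edge (s : Cell) : Prop := (s.1 % 2 = 0 ∧ s.2 % 2 = 1) ∨ (s.1 % 2 = 1 ∧ s.2 % 2 = 0)

lemma Le.refl (s : Cell) : Le s s := ⟨Or.inl rfl, Or.inl rfl⟩

lemma I1.trans {a b c : ℤ} (h : I1 a b) (h' : I1 b c) : I1 a c := by
  unfold I1 at *; omega

lemma Le.trans {a b c : Cell} (h : Le a b) (h' : Le b c) : Le a c :=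
  ⟨h.1.trans h'.1, h.2.trans h'.2⟩

def Down (S : Set Cell) : Prop := ∀ s t, Le s t → t ∈ S → s ∈ S

def Adj (S : Set Cell) (s t : Cell) : Prop := s ∈ S ∧ t ∈ S ∧ (Le s t ∨ Le t s)

def Conn (S : Set Cell) : Cell → Cell → Prop := Relation.ReflTransGen (Adj S)

lemma Conn.symm {S : Set Cell} {s t : Cell} (h : Conn S s t) : Conn S t s := by
  have hs : Std.Symm (Adj S) := ⟨fun a b h => ⟨h.2.1, h.1, h.2.2.symm⟩⟩
  exact Relation.ReflTransGen.stdSymm.symm _ _ h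

lemma Conn.trans {S : Set Cell} {s t u : Cell} (h : Conn S s t) (h' : Conn S t u) :
    Conn S s u := Relation.ReflTransGen.trans h h'

lemma Conn.refl {S : Set Cell} (s : Cell) : Conn S s s := Relation.ReflTransGen.refl

lemma Conn.of_le {S : Set Cell} {s t : Cell} (hs : s ∈ S) (ht : t ∈ S) (h : Le s t) :
    Conn S s t := Relation.ReflTransGen.single ⟨hs, ht, Or.inl h⟩

lemma Conn.mem {S : Set Cell} {s t : Cell} (h : Conn S s t) (hs : s ∈ S) : t ∈ S := by
  induction h with
  | refl => exact hs
  | tail _ h _ => exact h.2.1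

lemma Conn.mono {S S' : Set Cell} (hS : S ⊆ S') {s t : Cell} (h : Conn S s t) : Conn S' s t :=
  Relation.ReflTransGen.mono (fun _ _ h => ⟨hS h.1, hS h.2.1, h.2.2⟩) _ _ h

/-- `e` is an edge with the squares `s`, `t` on its two sides -/
def Btw (s e t : Cell) : Prop :=
  (e.1 % 2 = 0 ∧ e.2 % 2 = 1 ∧ s.2 = e.2 ∧ t.2 = e.2 ∧
    ((s.1 = e.1 - 1 ∧ t.1 = e.1 + 1) ∨ (s.1 = e.1 + 1 ∧ t.1 = e.1 - 1))) ∨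
  (e.1 % 2 = 1 ∧ e.2 % 2 = 0 ∧ s.1 = e.1 ∧ t.1 = e.1 ∧
    ((s.2 = e.2 - 1 ∧ t.2 = e.2 + 1) ∨ (s.2 = e.2 + 1 ∧ t.2 = e.2 - 1)))

lemma Btw.symm {s e t : Cell} (h : Btw s e t) : Btw t e s := by
  unfold Btw at *; omega
lemma Btw.le {s e t : Cell} (h : Btw s e t) : Le e s := by
  unfold Btw at h; unfold Le I1; omega
lemma Btw.le' {s e t : Cell} (h : Btw s e t) : Le e t := h.symm.le
lemma Btw.edge {s e t : Cell} (h : Btw s e t) : Edge e := by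
  unfold Btw at h; unfold Edge; omega
lemma Btw.sq {s e t : Cell} (h : Btw s e t) : Sq s := by
  unfold Btw at h; unfold Sq; omega
lemma Btw.cofaces {s e t r : Cell} (h : Btw s e t) (hr : Le e r) : r = s ∨ r = t ∨ r = e := by
  unfold Btw at h; unfold Le I1 at hr; simp only [Prod.ext_iff]; omega

lemma edge_exists_btw {e : Cell} (he : Edge e) : ∃ s t, Btw s e t := by
  rcases he with h | h
  · exact ⟨(e.1 - 1, e.2), (e.1 + 1, e.2), Or.inl (by simp; omega)⟩
  · exact ⟨(e.1, e.2 - 1), (e.1, e.2 + 1), Or.inr (by simp; omega)⟩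

/-- the square whose class agrees with that of the cell -/
def rho (m : ℤ) : ℤ := if m % 2 = 1 then m else if m % 8 = 0 ∨ m % 8 = 2 then m + 1 else m - 1

lemma rho_spec (m : ℤ) : I1 m (rho m) ∧ rho m % 2 = 1 := by
  unfold rho I1; split_ifs <;> omega

lemma rho_odd {m : ℤ} (h : m % 2 = 1) : rho m = m := by simp [rho, h]

def rhoc (s : Cell) : Cell := (rho s.1, rho s.2)

lemma le_rhoc (s : Cell) : Le s (rhoc s) := ⟨(rho_spec _).1, (rho_spec _).1⟩
lemma sq_rhoc (s : Cell) : Sq (rhoc s) := ⟨(rho_spec _).2, (rho_spec _).2⟩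
lemma rhoc_sq {s : Cell} (h : Sq s) : rhoc s = s := by
  simp [rhoc, rho_odd h.1, rho_odd h.2]

structure Good (A B : Set Cell) : Prop where
  finA : A.Finite
  finB : B.Finite
  downA : Down A
  downB : Down B
  rhoA1 : ∀ m n, (m, n) ∈ A ↔ (rho m, n) ∈ A
  rhoA2 : ∀ m n, (m, n) ∈ A ↔ (m, rho n) ∈ A
  rhoB1 : ∀ m n, (m, n) ∈ B ↔ (rho m, n) ∈ B
  rhoB2 : ∀ m n, (m, n) ∈ B ↔ (m, rho n) ∈ B
  one1 : ∀ m, m % 2 = 0 → (∀ n, (m - 1, n) ∈ A ↔ (m + 1, n) ∈ A) ∨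
    (∀ n, (m - 1, n) ∈ B ↔ (m + 1, n) ∈ B)
  one2 : ∀ n, n % 2 = 0 → (∀ m, (m, n - 1) ∈ A ↔ (m, n + 1) ∈ A) ∨
    (∀ m, (m, n - 1) ∈ B ↔ (m, n + 1) ∈ B)

lemma Good.swap {A B : Set Cell} (g : Good A B) : Good B A where
  finA := g.finB
  finB := g.finA
  downA := g.downB
  downB := g.downA
  rhoA1 := g.rhoB1
  rhoA2 := g.rhoB2
  rhoB1 := g.rhoA1
  rhoB2 := g.rhoA2
  one1 := fun m h => (g.one1 m h).symm
  one2 := fun m h => (g.one2 m h).symm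

def Cl (A B : Set Cell) (a b : Prop) : Set Cell := {s | (s ∈ A ↔ a) ∧ (s ∈ B ↔ b)}

variable {A B : Set Cell}

lemma Good.cl_rho1 (g : Good A B) {a b : Prop} (m n : ℤ) :
    (m, n) ∈ Cl A B a b ↔ (rho m, n) ∈ Cl A B a b := by
  simp only [Cl, mem_ofPred_eq, g.rhoA1 m n, g.rhoB1 m n]
lemma Good.cl_rho2 (g : Good A B) {a b : Prop} (m n : ℤ) :
    (m, n) ∈ Cl A B a b ↔ (m, rho n) ∈ Cl A B a b := by
  simp only [Cl, mem_ofPred_eq, g.rhoA2 m n, g.rhoB2 m n]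
lemma Good.cl_rhoc (g : Good A B) {a b : Prop} {s : Cell} (h : s ∈ Cl A B a b) :
    rhoc s ∈ Cl A B a b := by
  obtain ⟨m, n⟩ := s
  exact (g.cl_rho2 _ _).1 ((g.cl_rho1 _ _).1 h)
lemma Good.cl_conv (g : Good A B) {a b : Prop} {s t u : Cell} (h : Le s t) (h' : Le t u)
    (hs : s ∈ Cl A B a b) (hu : u ∈ Cl A B a b) : t ∈ Cl A B a b := by
  have h1 := g.downA _ _ h
  have h2 := g.downA _ _ h'
  have h3 := g.downB _ _ h
  have h4 := g.downB _ _ h'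
  simp only [Cl, mem_ofPred_eq] at *
  tauto

/-- an edge has the class of one of its sides -/
lemma Good.cl_edge (g : Good A B) {a b : Prop} {s e t : Cell} (h : Btw s e t)
    (hs : s ∈ Cl A B a b) (ht : t ∈ Cl A B a b) : e ∈ Cl A B a b := by
  have key : ∀ m n : ℤ, rho m ≠ m + 1 → rho m = m - 1 ∨ rho m = m := by
    intro m n h; have := (rho_spec m).1; unfold I1 at this; omega
  obtain ⟨e1, e2⟩ := e
  obtain ⟨s1, s2⟩ := s
  obtain ⟨t1, t2⟩ := t
  have r1 := rho_spec e1
  have r2 := rho_spec e2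
  unfold I1 at r1 r2
  simp only [Btw] at h
  rcases h with ⟨h1, h2, rfl, rfl, h3⟩ | ⟨h1, h2, rfl, rfl, h3⟩
  · rw [g.cl_rho1]
    have : rho e1 = s1 ∨ rho e1 = t1 := by omega
    rcases this with h | h <;> rw [h] <;> assumption
  · rw [g.cl_rho2]
    have : rho e2 = s2 ∨ rho e2 = t2 := by omega
    rcases this with h | h <;> rw [h] <;> assumption

lemma Good.conn_sq (g : Good A B) {a b : Prop} {s e t : Cell} (h : Btw s e t)
    (hs : s ∈ Cl A B a b) (ht : t ∈ Cl A B a b) : Conn (Cl A B a b) s t := by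
  have he := g.cl_edge h hs ht
  exact (Conn.of_le he hs h.le).symm.trans (Conn.of_le he ht h.le')

lemma Good.conn_rhoc (g : Good A B) {a b : Prop} {s : Cell} (h : s ∈ Cl A B a b) :
    Conn (Cl A B a b) s (rhoc s) := Conn.of_le h (g.cl_rhoc h) (le_rhoc s)

def SqAdj (S : Set Cell) (s t : Cell) : Prop := s ∈ S ∧ t ∈ S ∧ ∃ e, Btw s e t ∧ e ∈ S
def SqConn (S : Set Cell) : Cell → Cell → Prop := Relation.ReflTransGen (SqAdj S)

lemma SqConn.symm {S : Set Cell} {s t : Cell} (h : SqConn S s t) : SqConn S t s := by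
  have hs : Std.Symm (SqAdj S) :=
    ⟨fun a b h => ⟨h.2.1, h.1, h.2.2.imp fun e he => ⟨he.1.symm, he.2⟩⟩⟩
  exact Relation.ReflTransGen.stdSymm.symm _ _ h

lemma Good.sqconn_le (g : Good A B) {a b : Prop} {s t : Cell} (h : Le s t)
    (hs : s ∈ Cl A B a b) (ht : t ∈ Cl A B a b) : SqConn (Cl A B a b) (rhoc s) (rhoc t) := by
  obtain ⟨s1, s2⟩ := s
  obtain ⟨t1, t2⟩ := t
  have hm : (t1, s2) ∈ Cl A B a b :=
    g.cl_conv (s := (s1, s2)) (u := (t1, t2)) ⟨h.1, Or.inl rfl⟩ ⟨Or.inl rfl, h.2⟩ hs ht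
  have h1 : SqConn (Cl A B a b) (rhoc (s1, s2)) (rhoc (t1, s2)) := by
    by_cases hr : rho s1 = rho t1
    · simp only [rhoc, hr]; exact Relation.ReflTransGen.refl
    · refine Relation.ReflTransGen.single ⟨g.cl_rhoc hs, g.cl_rhoc hm, (s1, rho s2), ?_,
        (g.cl_rho2 _ _).1 hs⟩
      left
      have h1 := rho_spec s1
      have h2 := rho_spec t1
      have h3 := rho_spec s2
      have h4 := h.1
      unfold I1 at h1 h2 h3 h4
      dsimp only [rhoc] at h4 ⊢
      omega
  have h2 : SqConn (Cl A B a b) (rhoc (t1, s2)) (rhoc (t1, t2)) := by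
    by_cases hr : rho s2 = rho t2
    · simp only [rhoc, hr]; exact Relation.ReflTransGen.refl
    · refine Relation.ReflTransGen.single ⟨g.cl_rhoc hm, g.cl_rhoc ht, (rho t1, s2), ?_,
        (g.cl_rho1 _ _).1 hm⟩
      right
      have h1 := rho_spec s2
      have h2 := rho_spec t2
      have h3 := rho_spec t1
      have h4 := h.2
      unfold I1 at h1 h2 h3 h4
      dsimp only [rhoc] at h4 ⊢
      omega
  exact h1.trans h2

lemma Good.sqconn (g : Good A B) {a b : Prop} {s t : Cell}
    (h : Conn (Cl A B a b) s t) : SqConn (Cl A B a b) (rhoc s) (rhoc t) := by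
  induction h with
  | refl => exact Relation.ReflTransGen.refl
  | tail _ h ih =>
    refine ih.trans ?_
    obtain ⟨h1, h2, h | h⟩ := h
    · exact g.sqconn_le h h1 h2
    · exact (g.sqconn_le h h2 h1).symm

lemma prop_aux {a b a' b' : Prop} (h1 : (a ↔ a') ∨ (b ↔ b'))
    (h2 : ¬ ((a ↔ a') ∧ (b ↔ b'))) {p q r : Cell}
    (hp : p ∈ Cl A B a b) (hr : r ∈ Cl A B a' b') (o1 : (p ∈ A ↔ q ∈ A) ∨ (p ∈ B ↔ q ∈ B))
    (o2 : (q ∈ A ↔ r ∈ A) ∨ (q ∈ B ↔ r ∈ B)) : q ∈ Cl A B a b ∨ q ∈ Cl A B a' b' := by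
  simp only [Cl, mem_ofPred_eq] at *
  by_cases ha : a <;> by_cases hb : b <;> by_cases ha' : a' <;> by_cases hb' : b' <;>
    by_cases hq : q ∈ A <;> by_cases hq' : q ∈ B <;> simp_all

/-- Local lemma: if cells of two classes, that differ in one respect, have a common face,
then there is an edge between the two components. -/
lemma Good.loc (g : Good A B) {a b a' b' : Prop} (h1 : (a ↔ a') ∨ (b ↔ b'))
    (h2 : ¬ ((a ↔ a') ∧ (b ↔ b'))) {v s t : Cell} (hvs : Le v s) (hvt : Le v t)
    (hs : s ∈ Cl A B a b) (ht : t ∈ Cl A B a' b') :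
    ∃ s' e t', Btw s' e t' ∧ Le v e ∧ s' ∈ Cl A B a b ∧ t' ∈ Cl A B a' b' ∧
      Conn (Cl A B a b) s s' ∧ Conn (Cl A B a' b') t t' := by
  have hvs' := hvs.trans (le_rhoc s)
  have hvt' := hvt.trans (le_rhoc t)
  have hs' := g.cl_rhoc hs
  have ht' := g.cl_rhoc ht
  have cs := g.conn_rhoc hs
  have ct := g.conn_rhoc ht
  have qs := sq_rhoc s
  have qt := sq_rhoc t
  generalize rhoc s = p at *
  generalize rhoc t = q at *
  obtain ⟨p1, p2⟩ := p
  obtain ⟨q1, q2⟩ := q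
  obtain ⟨v1, v2⟩ := v
  simp only [Le, I1, Sq] at hvs' hvt' qs qt
  by_cases e1 : p1 = q1
  · by_cases e2 : p2 = q2
    · exfalso
      subst e1 e2
      exact h2 ⟨hs'.1.symm.trans ht'.1, hs'.2.symm.trans ht'.2⟩
    · refine ⟨_, (p1, v2), _, ?_, ?_, hs', ht', cs, ct⟩
      · right; dsimp only; omega
      · exact ⟨hvs'.1, Or.inl rfl⟩
  · by_cases e2 : p2 = q2
    · refine ⟨_, (v1, p2), _, ?_, ?_, hs', ht', cs, ct⟩
      · left; dsimp only; omega
      · exact ⟨Or.inl rfl, hvs'.2⟩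
    · -- diagonal
      have b1 : Btw (p1, p2) (v1, p2) (q1, p2) := by left; dsimp only; omega
      have b2 : Btw (q1, p2) (q1, v2) (q1, q2) := by right; dsimp only; omega
      have l1 : Le (v1, v2) (v1, p2) := ⟨Or.inl rfl, hvs'.2⟩
      have l2 : Le (v1, v2) (q1, v2) := ⟨hvt'.1, Or.inl rfl⟩
      have o1 : ((p1, p2) ∈ A ↔ (q1, p2) ∈ A) ∨ ((p1, p2) ∈ B ↔ (q1, p2) ∈ B) := by
        have := g.one1 v1 (by omega)
        have hh : (p1 = v1 - 1 ∧ q1 = v1 + 1) ∨ (p1 = v1 + 1 ∧ q1 = v1 - 1) := by omega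
        rcases hh with ⟨rfl, rfl⟩ | ⟨rfl, rfl⟩
        · exact this.imp (fun h => h _) (fun h => h _)
        · exact this.imp (fun h => (h _).symm) (fun h => (h _).symm)
      have o2 : ((q1, p2) ∈ A ↔ (q1, q2) ∈ A) ∨ ((q1, p2) ∈ B ↔ (q1, q2) ∈ B) := by
        have := g.one2 v2 (by omega)
        have hh : (p2 = v2 - 1 ∧ q2 = v2 + 1) ∨ (p2 = v2 + 1 ∧ q2 = v2 - 1) := by omega
        rcases hh with ⟨rfl, rfl⟩ | ⟨rfl, rfl⟩
        · exact this.imp (fun h => h _) (fun h => h _)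
        · exact this.imp (fun h => (h _).symm) (fun h => (h _).symm)
      have hq : (q1, p2) ∈ Cl A B a b ∨ (q1, p2) ∈ Cl A B a' b' := by
        exact prop_aux h1 h2 hs' ht' o1 o2
      rcases hq with hq | hq
      · exact ⟨_, _, _, b2, l2, hq, ht', cs.trans (g.conn_sq b1 hs' hq), ct⟩
      · exact ⟨_, _, _, b1, l1, hs', hq, cs, ct.trans (g.conn_sq b2.symm ht' hq)⟩

/-- vertex connectivity along edges of `K` -/
def VAdj (K : Set Cell) (u v : Cell) : Prop :=
  ∃ e ∈ K, Edge e ∧ Vtx u ∧ Vtx v ∧ Le u e ∧ Le v e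
def VConn (K : Set Cell) : Cell → Cell → Prop := Relation.ReflTransGen (VAdj K)

lemma VAdj.symm {K : Set Cell} {u v : Cell} (h : VAdj K u v) : VAdj K v u := by
  obtain ⟨e, h1, h2, h3, h4, h5, h6⟩ := h
  exact ⟨e, h1, h2, h4, h3, h6, h5⟩
lemma VConn.symm {S : Set Cell} {s t : Cell} (h : VConn S s t) : VConn S t s := by
  have hs : Std.Symm (VAdj S) := ⟨fun a b h => h.symm⟩
  exact Relation.ReflTransGen.stdSymm.symm _ _ h
lemma VConn.trans {S : Set Cell} {s t u : Cell} (h : VConn S s t) (h' : VConn S t u) :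
    VConn S s u := Relation.ReflTransGen.trans h h'

lemma exists_vtx (s : Cell) : ∃ v, Vtx v ∧ Le v s :=
  ⟨(s.1 - s.1 % 2, s.2 - s.2 % 2), by simp only [Vtx]; omega, by simp only [Le, I1]; omega⟩

lemma vconn_cell {K : Set Cell} (hK : Down K) {s u v : Cell} (hs : s ∈ K) (hu : Vtx u)
    (hv : Vtx v) (hus : Le u s) (hvs : Le v s) : VConn K u v := by
  obtain ⟨s1, s2⟩ := s
  obtain ⟨u1, u2⟩ := u
  obtain ⟨v1, v2⟩ := v
  simp only [Vtx] at hu hv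
  have hw : Le (v1, u2) (s1, s2) := ⟨hvs.1, hus.2⟩
  have h1 : VConn K (u1, u2) (v1, u2) := by
    by_cases h : u1 = v1
    · rw [h]; exact Relation.ReflTransGen.refl
    · refine Relation.ReflTransGen.single ⟨(s1, u2), hK (s1, u2) (s1, s2) ⟨Or.inl rfl, hus.2⟩ hs, ?_, ?_, ?_,
        ⟨hus.1, Or.inl rfl⟩, ⟨hvs.1, Or.inl rfl⟩⟩ <;>
      simp only [Edge, Vtx, Le, I1] at * <;> omega
  have h2 : VConn K (v1, u2) (v1, v2) := by
    by_cases h : u2 = v2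
    · rw [h]; exact Relation.ReflTransGen.refl
    · refine Relation.ReflTransGen.single ⟨(v1, s2), hK (v1, s2) (s1, s2) ⟨hvs.1, Or.inl rfl⟩ hs, ?_, ?_, ?_,
        ⟨Or.inl rfl, hus.2⟩, ⟨Or.inl rfl, hvs.2⟩⟩ <;>
      simp only [Edge, Vtx, Le, I1] at * <;> omega
  exact h1.trans h2

lemma vconn_of_conn {K : Set Cell} (hK : Down K) {s t u : Cell} (hs : s ∈ K)
    (h : Conn K s t) (hu : Vtx u) (hus : Le u s) :
    ∀ v, Vtx v → Le v t → VConn K u v := by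
  induction h with
  | refl => intro v hv hvs; exact vconn_cell hK hs hu hv hus hvs
  | @tail b c hab h ih =>
    intro v hv hvc
    obtain ⟨hb, hc, h | h⟩ := h
    · obtain ⟨w, hw, hwb⟩ := exists_vtx b
      exact (ih w hw hwb).trans (vconn_cell hK hc hw hv (hwb.trans h) hvc)
    · exact ih v hv (hvc.trans h)

end ZL

namespace ZL

lemma exists_prim (h : ℤ → ZMod 2) : ∃ F : ℤ → ZMod 2, F 0 = 0 ∧ ∀ i, F (i + 1) = F i + h i := by
  refine ⟨fun x => ∑ i ∈ Finset.Ico 0 x, h i + ∑ i ∈ Finset.Ico x 0, h i, by simp, ?_⟩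
  intro i
  rcases lt_or_ge i 0 with hi | hi
  · have e1 : Finset.Ico 0 (i + 1) = ∅ := Finset.Ico_eq_empty (by omega)
    have e2 : Finset.Ico 0 i = ∅ := Finset.Ico_eq_empty (by omega)
    have e3 : Finset.Ico i 0 = insert i (Finset.Ico (i + 1) 0) := by
      ext x; simp only [Finset.mem_Ico, Finset.mem_insert]; omega
    simp only [e1, e2, Finset.sum_empty, e3]
    rw [Finset.sum_insert (by simp)]
    have : h i + h i = 0 := CharTwo.add_self_eq_zero _
    linear_combination -this
  · have e1 : Finset.Ico (i + 1) 0 = ∅ := Finset.Ico_eq_empty (by omega)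
    have e2 : Finset.Ico i 0 = ∅ := Finset.Ico_eq_empty (by omega)
    have e3 : Finset.Ico 0 (i + 1) = insert i (Finset.Ico 0 i) := by
      ext x; simp only [Finset.mem_Ico, Finset.mem_insert]; omega
    simp only [e1, e2, Finset.sum_empty, e3]
    rw [Finset.sum_insert (by simp)]
    ring

lemma exists_pot (h g : ℤ → ℤ → ZMod 2)
    (curl : ∀ x y, h x y + g (x + 1) y + h x (y + 1) + g x y = 0) :
    ∃ f : ℤ → ℤ → ZMod 2, (∀ x y, f (x + 1) y = f x y + h x y) ∧
      (∀ x y, f x (y + 1) = f x y + g x y) := by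
  choose H H0 H1 using fun y => exists_prim (fun x => h x y)
  obtain ⟨V, -, V1⟩ := exists_prim (g 0)
  refine ⟨fun x y => V y + H y x, fun x y => by simp only [H1]; ring, ?_⟩
  intro x y
  have two : ∀ a : ZMod 2, a + a = 0 := fun a => CharTwo.add_self_eq_zero a
  induction x using Int.induction_on with
  | zero => simp only [H0, V1]; ring
  | succ i ih =>
    simp only [H1] at *
    linear_combination ih + curl i y - two (h i y) - two (g (i + 1) y)
  | pred i ih =>
    have a := H1 (y + 1) (-i - 1)
    have b := H1 y (-i - 1)
    have c := curl (-i - 1) y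
    simp only [sub_add_cancel] at *
    linear_combination ih - a + b - c + two (h (-i - 1) y) +
      two (g (-i) y)

def DAdj (K : Set Cell) (s t : Cell) : Prop := ∃ e, Btw s e t ∧ e ∉ K
def DConn (K : Set Cell) : Cell → Cell → Prop := Relation.ReflTransGen (DAdj K)

lemma DConn.symm {S : Set Cell} {s t : Cell} (h : DConn S s t) : DConn S t s := by
  have hs : Std.Symm (DAdj S) := ⟨fun a b h => h.imp fun e he => ⟨he.1.symm, he.2⟩⟩
  exact Relation.ReflTransGen.stdSymm.symm _ _ h
lemma DConn.trans {S : Set Cell} {s t u : Cell} (h : DConn S s t) (h' : DConn S t u) :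
    DConn S s u := Relation.ReflTransGen.trans h h'
lemma DConn.anti {S S' : Set Cell} (hS : S' ⊆ S) {s t : Cell} (h : DConn S s t) : DConn S' s t :=
  Relation.ReflTransGen.mono (fun _ _ h => h.imp fun _ he => ⟨he.1, fun h' => he.2 (hS h')⟩) _ _ h

def ind (s : Cell) (q : Cell) : ZMod 2 := by classical exact if q = s then 1 else 0

def curl (c : Cell → ZMod 2) (q : Cell) : ZMod 2 :=
  c (q.1 + 1, q.2) + c (q.1 - 1, q.2) + c (q.1, q.2 + 1) + c (q.1, q.2 - 1)

lemma curl_ind {s e t q : Cell} (h : Btw s e t) (hq : Sq q) :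
    curl (ind e) q = ind s q + ind t q := by
  obtain ⟨e1, e2⟩ := e
  obtain ⟨s1, s2⟩ := s
  obtain ⟨t1, t2⟩ := t
  obtain ⟨q1, q2⟩ := q
  simp only [Sq] at hq
  simp only [Btw] at h
  simp only [curl, ind, Prod.mk.injEq]
  rcases h with ⟨h1, h2, rfl, rfl, h3⟩ | ⟨h1, h2, rfl, rfl, h3⟩
  · have a1 : ¬ (q1 = e1) := by omega
    simp only [a1, false_and, if_false, add_zero]
    rcases h3 with ⟨rfl, rfl⟩ | ⟨rfl, rfl⟩
    · congr 1 <;> (congr 1; simp only [eq_iff_iff]; omega)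
    · rw [add_comm]; congr 1 <;> (congr 1; simp only [eq_iff_iff]; omega)
  · have a1 : ¬ (q2 = e2) := by omega
    simp only [a1, and_false, if_false, zero_add]
    rcases h3 with ⟨rfl, rfl⟩ | ⟨rfl, rfl⟩
    · congr 1 <;> (congr 1; simp only [eq_iff_iff]; omega)
    · rw [add_comm]; congr 1 <;> (congr 1; simp only [eq_iff_iff]; omega)

lemma curl_add (c d : Cell → ZMod 2) (q : Cell) :
    curl (fun e => c e + d e) q = curl c q + curl d q := by
  simp only [curl]; ring

lemma exists_chain {K : Set Cell} {s t : Cell} (h : DConn K s t) :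
    ∃ c : Cell → ZMod 2, (∀ e ∈ K, c e = 0) ∧ ∀ q, Sq q → curl c q = ind s q + ind t q := by
  have two : ∀ a : ZMod 2, a + a = 0 := fun a => CharTwo.add_self_eq_zero a
  induction h with
  | refl => exact ⟨fun _ => 0, fun _ _ => rfl, fun q _ => by simp [curl, two]⟩
  | @tail b d _ h ih =>
    obtain ⟨c, h1, h2⟩ := ih
    obtain ⟨e, he, heK⟩ := h
    refine ⟨fun x => c x + ind e x, ?_, ?_⟩
    · intro x hx
      have : x ≠ e := fun h => heK (h ▸ hx)
      simp [h1 x hx, ind, this]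
    · intro q hq
      rw [curl_add, h2 q hq, curl_ind he hq]
      linear_combination two (ind b q)

/-- discrete Jordan lemma -/
lemma exists_phi {K : Set Cell} {s e t : Cell} (hb : Btw s e t) (he : e ∈ K) (h : DConn K s t) :
    ∃ φ : Cell → ZMod 2,
      (∀ g ∈ K, Edge g → g ≠ e → ∀ u v, Vtx u → Vtx v → Le u g → Le v g → φ u = φ v) ∧
      (∀ u v, Vtx u → Vtx v → Le u e → Le v e → u ≠ v → φ u ≠ φ v) := by
  have two : ∀ a : ZMod 2, a + a = 0 := fun a => CharTwo.add_self_eq_zero a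
  obtain ⟨c0, c1, c2⟩ := exists_chain h
  obtain ⟨c, hc⟩ : ∃ c : Cell → ZMod 2, c = fun x => c0 x + ind e x := ⟨_, rfl⟩
  have hcurl : ∀ q, Sq q → curl c q = 0 := by
    intro q hq
    rw [hc, curl_add, c2 q hq, curl_ind hb hq]
    exact two _
  have hce : c e = 1 := by simp [hc, c1 e he, ind]
  have hcg : ∀ g ∈ K, g ≠ e → c g = 0 := by
    intro g hg hne; simp [hc, c1 g hg, ind, hne]
  obtain ⟨f, f1, f2⟩ := exists_pot (fun x y => c (2 * x + 1, 2 * y))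
    (fun x y => c (2 * x, 2 * y + 1)) (by
      intro x y
      have := hcurl (2 * x + 1, 2 * y + 1) (by simp only [Sq]; omega)
      simp only [curl] at this
      rw [show 2 * (x + 1) = 2 * x + 1 + 1 by ring, show 2 * (y + 1) = 2 * y + 1 + 1 by ring]
      rw [show 2 * x + 1 - 1 = 2 * x by ring, show 2 * y + 1 - 1 = 2 * y by ring] at this
      linear_combination this)
  have key : ∀ g : Cell, Edge g → ∀ u v, Vtx u → Vtx v → Le u g → Le v g → u ≠ v →
      f (u.1 / 2) (u.2 / 2) + f (v.1 / 2) (v.2 / 2) = c g := by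
    intro g hg u v hu hv hug hvg huv
    obtain ⟨g1, g2⟩ := g
    obtain ⟨u1, u2⟩ := u
    obtain ⟨v1, v2⟩ := v
    simp only [Vtx] at hu hv
    simp only [Le, I1] at hug hvg
    simp only [ne_eq, Prod.mk.injEq] at huv
    rcases hg with hg | hg
    · simp only at hg
      have a1 : u1 = g1 := by omega
      have a2 : v1 = g1 := by omega
      obtain ⟨x, hx⟩ : ∃ x, g1 = 2 * x := ⟨g1 / 2, by omega⟩
      obtain ⟨y, hy⟩ : ∃ y, g2 = 2 * y + 1 := ⟨g2 / 2, by omega⟩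
      have hf := f2 x y
      have b : (u2 / 2 = y ∧ v2 / 2 = y + 1) ∨ (u2 / 2 = y + 1 ∧ v2 / 2 = y) := by omega
      have b1 : u1 / 2 = x := by omega
      have b2 : v1 / 2 = x := by omega
      simp only [b1, b2, hx, hy]
      rcases b with ⟨h1, h2⟩ | ⟨h1, h2⟩ <;> rw [h1, h2, hf] <;> linear_combination two (f x y)
    · simp only at hg
      have a1 : u2 = g2 := by omega
      have a2 : v2 = g2 := by omega
      obtain ⟨x, hx⟩ : ∃ x, g1 = 2 * x + 1 := ⟨g1 / 2, by omega⟩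
      obtain ⟨y, hy⟩ : ∃ y, g2 = 2 * y := ⟨g2 / 2, by omega⟩
      have hf := f1 x y
      have b : (u1 / 2 = x ∧ v1 / 2 = x + 1) ∨ (u1 / 2 = x + 1 ∧ v1 / 2 = x) := by omega
      have b1 : u2 / 2 = y := by omega
      have b2 : v2 / 2 = y := by omega
      simp only [b1, b2, hx, hy]
      rcases b with ⟨h1, h2⟩ | ⟨h1, h2⟩ <;> rw [h1, h2, hf] <;> linear_combination two (f x y)
  refine ⟨fun u => f (u.1 / 2) (u.2 / 2), ?_, ?_⟩
  · intro g hg hge hne u v hu hv hug hvg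
    by_cases huv : u = v
    · rw [huv]
    · have := key g hge u v hu hv hug hvg huv
      rw [hcg g hg hne] at this
      exact CharTwo.add_eq_zero.1 this
  · intro u v hu hv hug hvg huv heq
    have := key e hb.edge u v hu hv hug hvg huv
    rw [hce] at this
    simp only at heq
    rw [heq, two] at this
    exact zero_ne_one this

end ZL

namespace ZL

variable {A B : Set Cell}

def STouch (S S' : Set Cell) (s s' : Cell) : Prop :=
  ∃ v t t', ¬ Vtx v ∧ Le v t ∧ Le v t' ∧ Conn S s t ∧ Conn S' s' t'

def WTouch (S S' : Set Cell) (s : Cell) : Prop :=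
  ∃ v t t', Le v t ∧ Le v t' ∧ Conn S s t ∧ t' ∈ S'

abbrev FP (A B : Set Cell) := Cl A B True False
abbrev TP (A B : Set Cell) := Cl A B True True
abbrev TN (A B : Set Cell) := Cl A B False False

lemma mem_FP {s : Cell} : s ∈ FP A B ↔ s ∈ A ∧ s ∉ B := by simp [FP, Cl]
lemma mem_TP {s : Cell} : s ∈ TP A B ↔ s ∈ A ∧ s ∈ B := by simp [TP, Cl]
lemma mem_TN {s : Cell} : s ∈ TN A B ↔ s ∉ A ∧ s ∉ B := by simp [TN, Cl]

structure Reg (A B : Set Cell) : Prop where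
  tp_ex : ∀ s ∈ FP A B, WTouch (FP A B) (TP A B) s
  tn_ex : ∀ s ∈ FP A B, WTouch (FP A B) (TN A B) s
  tp_un : ∀ s ∈ FP A B, ∀ p ∈ TP A B, ∀ q ∈ TP A B, STouch (FP A B) (TP A B) s p →
    STouch (FP A B) (TP A B) s q → Conn (TP A B) p q
  tn_un : ∀ s ∈ FP A B, ∀ p ∈ TN A B, ∀ q ∈ TN A B, STouch (FP A B) (TN A B) s p →
    STouch (FP A B) (TN A B) s q → Conn (TN A B) p q

def Codim (t s : Cell) : Prop :=
  (s.1 % 2 = 1 ∧ t.2 = s.2 ∧ (t.1 = s.1 + 1 ∨ t.1 = s.1 - 1)) ∨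
  (s.2 % 2 = 1 ∧ t.1 = s.1 ∧ (t.2 = s.2 + 1 ∨ t.2 = s.2 - 1))

lemma Codim.le {t s : Cell} (h : Codim t s) : Le t s := by
  unfold Codim at h; unfold Le I1; omega

def FreePair (K : Set Cell) (s t : Cell) : Prop :=
  s ∈ K ∧ Codim t s ∧ ∀ r ∈ K, Le t r → r = s ∨ r = t

def Collapse (K K' : Set Cell) : Prop :=
  Down K ∧ Down K' ∧ ∃ s t, FreePair K s t ∧ K' = K \ {s, t}

lemma FreePair.down {K : Set Cell} (hK : Down K) {s t : Cell} (h : FreePair K s t) :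
    Down (K \ {s, t}) := by
  intro a b hab hb
  refine ⟨hK _ _ hab hb.1, ?_⟩
  rintro (rfl | rfl)
  · rcases h.2.2 b hb.1 (h.2.1.le.trans hab) with h | h <;> exact hb.2 (by simp [h])
  · rcases h.2.2 b hb.1 hab with h | h <;> exact hb.2 (by simp [h])

structure Inv (A B K : Set Cell) : Prop where
  sub : K ⊆ A
  sup : A ∩ B ⊆ K
  down : Down K
  dual : ∀ s ∈ FP A B, Sq s → s ∉ K → ∃ t ∈ TN A B, Sq t ∧ DConn K s t ∧
    STouch (FP A B) (TN A B) s t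
  conn : ∀ v ∈ K, Vtx v → ∃ p ∈ A ∩ B, VConn K v p
  col : Relation.ReflTransGen Collapse A K

lemma Good.edge_notB (g : Good A B) {s e t : Cell} (h : Btw s e t) (hs : s ∉ B) (ht : t ∉ B) :
    e ∉ B := by
  have h1 : rhoc e ∈ Cl A B (e ∈ A) (e ∈ B) := g.cl_rhoc ⟨Iff.rfl, Iff.rfl⟩
  rcases h.cofaces (le_rhoc e) with h2 | h2 | h2
  · rw [← h1.2, h2]; exact hs
  · rw [← h1.2, h2]; exact ht
  · exfalso
    have := sq_rhoc e
    rw [h2] at this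
    have := h.edge
    unfold Edge at this; unfold Sq at *; omega

lemma Good.down_TP (g : Good A B) : Down (TP A B) := by
  intro s t h ht
  rw [mem_TP] at *
  exact ⟨g.downA _ _ h ht.1, g.downB _ _ h ht.2⟩

lemma inv_init (g : Good A B) (r : Reg A B) : Inv A B A where
  sub := subset_rfl
  sup := inter_subset_left
  down := g.downA
  dual := fun s hs _ h => absurd (mem_FP.1 hs).1 h
  col := Relation.ReflTransGen.refl
  conn := by
    intro v hv hvv
    by_cases hB : v ∈ B
    · exact ⟨v, ⟨hv, hB⟩, Relation.ReflTransGen.refl⟩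
    · have hF : v ∈ FP A B := mem_FP.2 ⟨hv, hB⟩
      obtain ⟨n, t, t', h1, h2, h3, h4⟩ := r.tp_ex v hF
      obtain ⟨p, hp, hpn⟩ := exists_vtx n
      have hpT := mem_TP.1 (g.down_TP _ _ (hpn.trans h2) h4)
      refine ⟨p, hpT, ?_⟩
      have h5 : Conn A v t := h3.mono (fun x hx => (mem_FP.1 hx).1)
      exact vconn_of_conn g.downA hv h5 hvv (Le.refl _) p hp (hpn.trans h1)

/-- going around a square -/
lemma around {K : Set Cell} (hK : Down K) {s e t u v : Cell} (hs : s ∈ K) (h : Btw s e t)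
    (hu : Vtx u) (hv : Vtx v) (hue : Le u e) (hve : Le v e) : VConn (K \ {s, e}) u v := by
  by_cases huv : u = v
  · rw [huv]; exact Relation.ReflTransGen.refl
  have mem : ∀ x, Edge x → Le x s → x ≠ e → x ∈ K \ {s, e} := by
    intro x hx hxs hne
    refine ⟨hK _ _ hxs hs, ?_⟩
    rintro (rfl | rfl)
    · have := h.sq; unfold Sq at this; unfold Edge at hx; omega
    · exact hne rfl
  obtain ⟨s1, s2⟩ := s
  obtain ⟨e1, e2⟩ := e
  obtain ⟨u1, u2⟩ := u
  obtain ⟨v1, v2⟩ := v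
  have hsq := h.sq
  simp only [Sq] at hsq
  simp only [Vtx] at hu hv
  simp only [Le, I1] at hue hve
  simp only [Prod.mk.injEq] at huv
  simp only [Btw] at h
  have step : ∀ a b x : Cell, Edge x → Le x (s1, s2) → x ≠ (e1, e2) → Vtx a → Vtx b → Le a x →
      Le b x → VConn (K \ {(s1, s2), (e1, e2)}) a b := fun a b x h1 h2 h3 h4 h5 h6 h7 =>
    Relation.ReflTransGen.single ⟨x, mem x h1 h2 h3, h1, h4, h5, h6, h7⟩
  rcases h with h | h
  · have hu1 : u1 = e1 := by omega
    have hv1 : v1 = e1 := by omega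
    refine (step (u1, u2) (2 * s1 - e1, u2) (s1, u2) ?_ ?_ ?_ ?_ ?_ ?_ ?_).trans
      ((step (2 * s1 - e1, u2) (2 * s1 - e1, v2) (2 * s1 - e1, s2) ?_ ?_ ?_ ?_ ?_ ?_ ?_).trans
      (step (2 * s1 - e1, v2) (v1, v2) (s1, v2) ?_ ?_ ?_ ?_ ?_ ?_ ?_)) <;>
    simp only [Edge, Vtx, Le, I1, ne_eq, Prod.mk.injEq, true_or, and_true, true_and] <;> omega
  · have hu1 : u2 = e2 := by omega
    have hv1 : v2 = e2 := by omega
    refine (step (u1, u2) (u1, 2 * s2 - e2) (u1, s2) ?_ ?_ ?_ ?_ ?_ ?_ ?_).trans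
      ((step (u1, 2 * s2 - e2) (v1, 2 * s2 - e2) (s1, 2 * s2 - e2) ?_ ?_ ?_ ?_ ?_ ?_ ?_).trans
      (step (v1, 2 * s2 - e2) (v1, v2) (v1, s2) ?_ ?_ ?_ ?_ ?_ ?_ ?_)) <;>
    simp only [Edge, Vtx, Le, I1, ne_eq, Prod.mk.injEq, true_or, and_true, true_and] <;> omega

lemma Sq.ne_edge {s e : Cell} (hs : Sq s) (he : Edge e) : s ≠ e := by
  rintro rfl; unfold Sq at hs; unfold Edge at he; omega
lemma Vtx.ne_edge {s e : Cell} (hs : Vtx s) (he : Edge e) : s ≠ e := by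
  rintro rfl; unfold Vtx at hs; unfold Edge at he; omega
lemma Vtx.ne_sq {s e : Cell} (hs : Vtx s) (he : Sq e) : s ≠ e := by
  rintro rfl; unfold Vtx at hs; unfold Sq at he; omega

/-- first case: a square is left -/
lemma step_square (g : Good A B) (r : Reg A B) {K : Set Cell} (i : Inv A B K)
    {s : Cell} (hs : Sq s) (hsK : s ∈ K) (hsB : s ∉ B) : ∃ K', K' ⊂ K ∧ Inv A B K' := by
  have ex : ∃ s e t, Btw s e t ∧ s ∈ K ∧ e ∉ B ∧ t ∉ K := by
    by_contra hcon
    push Not at hcon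
    have hsF : s ∈ FP A B := mem_FP.2 ⟨i.sub hsK, hsB⟩
    obtain ⟨n, t, t', h1, h2, h3, h4⟩ := r.tn_ex s hsF
    obtain ⟨p, e, q, hb, -, hp, hq, cp, cq⟩ := g.loc (Or.inr Iff.rfl) (by simp) h1 h2
      (h3.mem hsF) h4
    have hall : ∀ t, SqConn (FP A B) s t → t ∈ K := by
      intro t ht
      induction ht with
      | refl => exact hsK
      | tail _ h ih =>
        obtain ⟨_, _, e, he, heF⟩ := h
        exact hcon _ _ _ he ih (mem_FP.1 heF).2
    have hpK : p ∈ K := by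
      apply hall
      have := g.sqconn (h3.trans cp)
      rwa [rhoc_sq hs, rhoc_sq hb.sq] at this
    have := hcon _ _ _ hb hpK (g.edge_notB hb (mem_FP.1 hp).2 (mem_TN.1 hq).2)
    exact (mem_TN.1 hq).1 (i.sub this)
  obtain ⟨s, e, t, hb, hsK, heB, htK⟩ := ex
  have hsB : s ∉ B := fun h => heB (g.downB _ _ hb.le h)
  have htB : t ∉ B := fun h => heB (g.downB _ _ hb.le' h)
  have hsF : s ∈ FP A B := mem_FP.2 ⟨i.sub hsK, hsB⟩
  have heF : e ∈ FP A B := mem_FP.2 ⟨i.sub (i.down _ _ hb.le hsK), heB⟩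
  have hfree : FreePair K s e := by
    refine ⟨hsK, ?_, ?_⟩
    · unfold Btw at hb; unfold Codim; omega
    · intro q hq heq
      rcases hb.cofaces heq with h | h | h
      · exact Or.inl h
      · exact absurd (h ▸ hq) htK
      · exact Or.inr h
  have hKK : K \ {s, e} ⊆ K := sdiff_subset
  refine ⟨K \ {s, e}, ⟨hKK, fun h => (h hsK).2 (by simp)⟩, ⟨hKK.trans i.sub, ?_, hfree.down i.down,
    ?_, ?_, i.col.tail ⟨i.down, hfree.down i.down, s, e, hfree, rfl⟩⟩⟩
  · intro x hx
    refine ⟨i.sup hx, ?_⟩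
    rintro (rfl | rfl)
    · exact hsB hx.2
    · exact heB hx.2
  · intro q hqF hq hqK
    by_cases hqK' : q ∈ K
    · have hqs : q = s := by
        by_contra hne
        apply hqK
        refine ⟨hqK', ?_⟩
        rintro (h | h)
        · exact hne h
        · exact hq.ne_edge hb.edge h
      subst hqs
      have had : DConn (K \ {q, e}) q t := Relation.ReflTransGen.single ⟨e, hb, by simp⟩
      have hce : Conn (FP A B) q e := (Conn.of_le heF hsF hb.le).symm
      by_cases htA : t ∈ A
      · have htF : t ∈ FP A B := mem_FP.2 ⟨htA, htB⟩
        obtain ⟨w, hw, hw1, hw2, v, a, b, hv, va, vb, ca, cb⟩ := i.dual t htF hb.symm.sq htK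
        exact ⟨w, hw, hw1, had.trans (hw2.anti hKK), v, a, b, hv, va, vb,
          (hce.trans (Conn.of_le heF htF hb.le')).trans ca, cb⟩
      · refine ⟨t, mem_TN.2 ⟨htA, htB⟩, hb.symm.sq, had, e, q, t, ?_, hb.le, hb.le', Conn.refl _,
          Conn.refl _⟩
        exact fun h => h.ne_edge hb.edge rfl
    · obtain ⟨w, hw, hw1, hw2, hw3⟩ := i.dual q hqF hq hqK'
      exact ⟨w, hw, hw1, hw2.anti hKK, hw3⟩
  · intro v hv hvv
    obtain ⟨p, hp, h⟩ := i.conn v hv.1 hvv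
    refine ⟨p, hp, ?_⟩
    clear hp hv hvv
    induction h with
    | refl => exact Relation.ReflTransGen.refl
    | @tail b c _ h ih =>
      refine VConn.trans ih ?_
      obtain ⟨f, hf, hfe, h1, h2, h3, h4⟩ := h
      by_cases hfe' : f = e
      · subst hfe'
        exact around i.down hsK hb h1 h2 h3 h4
      · refine Relation.ReflTransGen.single ⟨f, ⟨hf, ?_⟩, hfe, h1, h2, h3, h4⟩
        rintro (h | h)
        · exact hb.sq.ne_edge hfe h.symm
        · exact hfe' h

/-- second case: remove a free vertex -/
lemma edge_third {e u v w : Cell} (he : Edge e) (hu : Vtx u) (hv : Vtx v) (hw : Vtx w)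
    (hue : Le u e) (hve : Le v e) (hwe : Le w e) (huv : u ≠ v) (hwv : w ≠ v) : u = w := by
  obtain ⟨e1, e2⟩ := e
  obtain ⟨u1, u2⟩ := u
  obtain ⟨v1, v2⟩ := v
  obtain ⟨w1, w2⟩ := w
  simp only [Edge, Vtx, Le, I1, ne_eq, Prod.mk.injEq] at *
  obtain ⟨ha, hb⟩ | ⟨ha, hb⟩ := he
  · have h1 : u1 = e1 := by omega
    have h2 : v1 = e1 := by omega
    have h3 : w1 = e1 := by omega
    refine ⟨by omega, by omega⟩
  · have h1 : u2 = e2 := by omega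
    have h2 : v2 = e2 := by omega
    have h3 : w2 = e2 := by omega
    refine ⟨by omega, by omega⟩

lemma step_leaf (g : Good A B) {K : Set Cell} (i : Inv A B K)
    {f v : Cell} (hv : Vtx v) (hvB : v ∉ B) (hf : f ∈ K) (hfe : Edge f) (hvf : Le v f)
    (huniq : ∀ q ∈ K, Le v q → q = f ∨ q = v) : ∃ K', K' ⊂ K ∧ Inv A B K' := by
  have hfree : FreePair K f v := by
    refine ⟨hf, ?_, huniq⟩
    unfold Edge at hfe; unfold Vtx at hv; unfold Le I1 at hvf; unfold Codim; omega
  have hKK : K \ {f, v} ⊆ K := sdiff_subset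
  have hfB : f ∉ B := fun h => hvB (g.downB _ _ hvf h)
  refine ⟨K \ {f, v}, ⟨hKK, fun h => (h hf).2 (by simp)⟩, ⟨hKK.trans i.sub, ?_, hfree.down i.down,
    ?_, ?_, i.col.tail ⟨i.down, hfree.down i.down, f, v, hfree, rfl⟩⟩⟩
  · intro x hx
    refine ⟨i.sup hx, ?_⟩
    rintro (rfl | rfl)
    · exact hfB hx.2
    · exact hvB hx.2
  · intro q hqF hq hqK
    have hqK' : q ∉ K := by
      intro h
      apply hqK
      refine ⟨h, ?_⟩
      rintro (h | h)
      · exact hq.ne_edge hfe h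
      · exact hv.ne_sq hq h.symm
    obtain ⟨w, hw, hw1, hw2, hw3⟩ := i.dual q hqF hq hqK'
    exact ⟨w, hw, hw1, hw2.anti hKK, hw3⟩
  · have claim : ∀ x p, p ∈ A ∩ B → VConn K x p →
        (x ≠ v → VConn (K \ {f, v}) x p) ∧
        (x = v → ∀ y, Vtx y → Le y f → y ≠ v → VConn (K \ {f, v}) y p) := by
      intro x p hp h
      have hpv : p ≠ v := fun h => hvB (h ▸ hp.2)
      induction h using Relation.ReflTransGen.head_induction_on with
      | refl => exact ⟨fun _ => Relation.ReflTransGen.refl, fun h => absurd h hpv⟩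
      | @head a c h _ ih =>
        obtain ⟨e, he, hee, h1, h2, h3, h4⟩ := h
        have edge_eq : ∀ z, Le v z → z ∈ K → Edge z → z = f := fun z hz hzK hze =>
          (huniq z hzK hz).resolve_right fun h => hv.ne_edge hze h.symm
        constructor
        · intro hav
          by_cases hcv : c = v
          · subst hcv
            have := edge_eq e h4 he hee
            subst this
            exact ih.2 rfl a h1 h3 hav
          · by_cases hef : e = f
            · -- both ends differ from `v`, hence equal
              have hac : a = c := by
                subst hef
                exact edge_third hee h1 hv h2 h3 hvf h4 hav hcv
              rw [hac]; exact ih.1 hcv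
            · refine Relation.ReflTransGen.head ⟨e, ⟨he, ?_⟩, hee, h1, h2, h3, h4⟩ (ih.1 hcv)
              rintro (h | h)
              · exact hef h
              · exact hv.ne_edge hee h.symm
        · intro hav y hy hyf hyv
          subst hav
          have := edge_eq e h3 he hee
          subst this
          by_cases hcv : c = a
          · exact ih.2 hcv y hy hyf hyv
          · have hyc : y = c := edge_third hee hy h1 h2 hyf h3 h4 hyv hcv
            rw [hyc]; exact ih.1 hcv
    intro x hx hxv
    obtain ⟨p, hp, h⟩ := i.conn x hx.1 hxv
    refine ⟨p, hp, (claim x p hp h).1 ?_⟩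
    rintro rfl
    exact hx.2 (by simp)

lemma exists_D {K : Set Cell} {L : Set Cell} (h : ∀ v ∈ K, Vtx v → ∃ p ∈ L, VConn K v p) :
    ∃ D : Cell → ℕ, ∀ v ∈ K, Vtx v → v ∉ L → ∃ u, VAdj K v u ∧ D u < D v := by
  classical
  let R : ℕ → Cell → Prop := fun n => Nat.rec (fun v => v ∈ L) (fun _ Q v => ∃ u, VAdj K v u ∧ Q u) n
  have hR : ∀ v p, p ∈ L → VConn K v p → ∃ n, R n v := by
    intro v p hp h
    induction h using Relation.ReflTransGen.head_induction_on with
    | refl => exact ⟨0, hp⟩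
    | head h _ ih =>
      obtain ⟨n, hn⟩ := ih
      exact ⟨n + 1, _, h, hn⟩
  refine ⟨fun v => sInf {n | R n v}, ?_⟩
  intro v hv hvv hvL
  obtain ⟨p, hp, hc⟩ := h v hv hvv
  have hne : {n | R n v}.Nonempty := hR v p hp hc
  have hmem := Nat.sInf_mem hne
  show ∃ u, VAdj K v u ∧ sInf {n | R n u} < sInf {n | R n v}
  generalize sInf {n | R n v} = m at hmem
  cases m with
  | zero => exact absurd hmem hvL
  | succ m =>
    obtain ⟨u, hu, hm⟩ := hmem
    exact ⟨u, hu, Nat.lt_succ_of_le (Nat.sInf_le hm)⟩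

/-- Jordan lemma in the present situation -/
lemma jordan (g : Good A B) (r : Reg A B) {K : Set Cell} (i : Inv A B K)
    (hno : ∀ s ∈ K, Sq s → s ∈ B) {e : Cell} (he : Edge e) (heK : e ∈ K) (heB : e ∉ B) :
    ∃ φ : Cell → ZMod 2,
      (∀ g ∈ K, Edge g → g ≠ e → ∀ u v, Vtx u → Vtx v → Le u g → Le v g → φ u = φ v) ∧
      (∀ u v, Vtx u → Vtx v → Le u e → Le v e → u ≠ v → φ u ≠ φ v) := by
  obtain ⟨s, t, hb⟩ := edge_exists_btw he
  have heF : e ∈ FP A B := mem_FP.2 ⟨i.sub heK, heB⟩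
  have side : ∀ s, Sq s → Le e s → ∃ s' ∈ TN A B, Sq s' ∧ DConn K s s' ∧
      STouch (FP A B) (TN A B) e s' := by
    intro s hs hes
    have hsB : s ∉ B := fun h => heB (g.downB _ _ hes h)
    have hsK : s ∉ K := fun h => hsB (hno s h hs)
    by_cases hsA : s ∈ A
    · have hsF : s ∈ FP A B := mem_FP.2 ⟨hsA, hsB⟩
      obtain ⟨w, hw, hw1, hw2, v, a, b, hv, va, vb, ca, cb⟩ := i.dual s hsF hs hsK
      exact ⟨w, hw, hw1, hw2, v, a, b, hv, va, vb, (Conn.of_le heF hsF hes).trans ca, cb⟩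
    · exact ⟨s, mem_TN.2 ⟨hsA, hsB⟩, hs, Relation.ReflTransGen.refl, e, e, s,
        fun h => h.ne_edge he rfl, Le.refl _, hes, Conn.refl _, Conn.refl _⟩
  obtain ⟨s', hs', qs, ds, ts⟩ := side s hb.sq hb.le
  obtain ⟨t', ht', qt, dt, tt⟩ := side t hb.symm.sq hb.le'
  have hc := g.sqconn (r.tn_un e heF s' hs' t' ht' ts tt)
  rw [rhoc_sq qs, rhoc_sq qt] at hc
  have hd : DConn K s' t' := Relation.ReflTransGen.mono
    (fun a b h => h.2.2.imp fun x hx => ⟨hx.1, fun h' => (mem_TN.1 hx.2).1 (i.sub h')⟩) _ _ hc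
  exact exists_phi hb heK ((ds.trans hd).trans dt.symm)

/-- two `TP` vertices touching the same component have the same potential -/
lemma phi_TP (g : Good A B) (r : Reg A B) {K : Set Cell} (i : Inv A B K)
    {e : Cell} (heK : e ∈ K) (heB : e ∉ B) {φ : Cell → ZMod 2}
    (hφ : ∀ g ∈ K, Edge g → g ≠ e → ∀ u v, Vtx u → Vtx v → Le u g → Le v g → φ u = φ v)
    {p q : Cell} (hp : p ∈ TP A B) (hq : q ∈ TP A B) (vp : Vtx p) (vq : Vtx q)
    {a b : Cell} (ha : Conn (FP A B) e a) (hb : Conn (FP A B) e b) (pa : Le p a) (qb : Le q b) :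
    φ p = φ q := by
  have heF : e ∈ FP A B := mem_FP.2 ⟨i.sub heK, heB⟩
  have touch : ∀ p a, p ∈ TP A B → Conn (FP A B) e a → Le p a → STouch (FP A B) (TP A B) e p := by
    intro p a hp ha pa
    obtain ⟨s, f, t, hbt, hpf, hs, ht, cs, ct⟩ := g.loc (a := True) (b := False) (a' := True)
      (b' := True) (Or.inl Iff.rfl) (by simp) pa (Le.refl p) (ha.mem heF) hp
    exact ⟨f, s, t, fun h => h.ne_edge hbt.edge rfl, hbt.le, hbt.le', ha.trans cs, ct⟩
  have hc := r.tp_un e heF p hp q hq (touch p a hp ha pa) (touch q b hq hb qb)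
  have hv := vconn_of_conn g.down_TP hp hc vp (Le.refl p) q vq (Le.refl q)
  clear hc
  induction hv with
  | refl => rfl
  | tail _ h ih =>
    obtain ⟨x, hx, hxe, h1, h2, h3, h4⟩ := h
    have hxB := mem_TP.1 hx
    have hb : TP A B ⊆ K := fun y hy => i.sup (mem_TP.1 hy)
    have key : ∀ y, VConn (TP A B) p y → φ p = φ y := by
      intro y hy
      induction hy with
      | refl => rfl
      | tail _ h ih =>
        obtain ⟨x, hx, hxe, h1, h2, h3, h4⟩ := h
        exact ih.trans (hφ x (hb hx) hxe (fun h => heB (h ▸ (mem_TP.1 hx).2)) _ _ h1 h2 h3 h4)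
    exact key _ (Relation.ReflTransGen.tail ‹_› ⟨x, hx, hxe, h1, h2, h3, h4⟩)

lemma inv_step (g : Good A B) (r : Reg A B) {K : Set Cell} (i : Inv A B K)
    (hne : K ≠ A ∩ B) : ∃ K', K' ⊂ K ∧ Inv A B K' := by
  by_cases hno : ∀ s ∈ K, Sq s → s ∈ B
  swap
  · push Not at hno
    obtain ⟨s, h1, h2, h3⟩ := hno
    exact step_square g r i h2 h1 h3
  have hTP : ∀ {x}, x ∈ K → x ∈ B → x ∈ TP A B := fun hx hB => mem_TP.2 ⟨i.sub hx, hB⟩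
  by_cases hvx : ∃ v ∈ K, Vtx v ∧ v ∉ B
  · obtain ⟨D, hD⟩ := exists_D i.conn
    have hfin : {v | v ∈ K ∧ Vtx v ∧ v ∉ B}.Finite := g.finA.subset fun v hv => i.sub hv.1
    obtain ⟨v, ⟨hvK, hvv, hvB⟩, hmax⟩ := Set.exists_max_image _ D hfin hvx
    obtain ⟨w, ⟨f, hfK, hfe, -, hwv, hvf, hwf⟩, hDw⟩ := hD v hvK hvv (fun h => hvB h.2)
    by_cases huniq : ∀ q ∈ K, Le v q → q = f ∨ q = v
    · exact step_leaf g i hvv hvB hfK hfe hvf huniq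
    exfalso
    push Not at huniq
    obtain ⟨e, heK, hve, hef, hev⟩ := huniq
    have heB : e ∉ B := fun h => hvB (g.downB _ _ hve h)
    have he : Edge e := by
      by_contra hc
      by_cases hs : Sq e
      · exact heB (hno e heK hs)
      · apply hev
        unfold Sq at hs; unfold Edge at hc; unfold Vtx at hvv; unfold Le I1 at hve
        simp only [Prod.ext_iff]
        omega
    have heF : e ∈ FP A B := mem_FP.2 ⟨i.sub heK, heB⟩
    have hvF : v ∈ FP A B := mem_FP.2 ⟨i.sub hvK, hvB⟩
    obtain ⟨φ, h1, h2⟩ := jordan g r i hno he heK heB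
    obtain ⟨u, huv, hue, hne'⟩ : ∃ u, Vtx u ∧ Le u e ∧ u ≠ v := by
      unfold Edge at he; unfold Vtx at hvv; unfold Le I1 at hve
      refine ⟨(2 * e.1 - v.1, 2 * e.2 - v.2), ?_, ?_, ?_⟩ <;>
      simp only [Vtx, Le, I1, ne_eq, Prod.ext_iff] <;> omega
    have descend : ∀ n x, D x ≤ n → x ∈ K → Vtx x → x ≠ v → (x ∉ B → D x ≤ D v) →
        (∃ a, Conn (FP A B) e a ∧ Le x a) →
        ∃ p ∈ TP A B, Vtx p ∧ φ x = φ p ∧ ∃ a, Conn (FP A B) e a ∧ Le p a := by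
      intro n
      induction n with
      | zero =>
        intro x hx hxK hxv hxne hxD hxa
        by_cases hxB : x ∈ B
        · exact ⟨x, hTP hxK hxB, hxv, rfl, hxa⟩
        · obtain ⟨y, -, hy⟩ := hD x hxK hxv (fun h => hxB h.2)
          omega
      | succ n ih =>
        intro x hx hxK hxv hxne hxD hxa
        by_cases hxB : x ∈ B
        · exact ⟨x, hTP hxK hxB, hxv, rfl, hxa⟩
        · obtain ⟨y, ⟨z, hzK, hze, -, hyv, hxz, hyz⟩, hy⟩ := hD x hxK hxv (fun h => hxB h.2)
          have := hxD hxB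
          have hyne : y ≠ v := by rintro rfl; omega
          have hxy : x ≠ y := by rintro rfl; omega
          have hze' : z ≠ e := by
            rintro rfl
            exact hxy (edge_third he hxv hvv hyv hxz hve hyz hxne hyne)
          have hzB : z ∉ B := fun h => hxB (g.downB _ _ hxz h)
          have hzF : z ∈ FP A B := mem_FP.2 ⟨i.sub hzK, hzB⟩
          have hxF : x ∈ FP A B := mem_FP.2 ⟨i.sub hxK, hxB⟩
          obtain ⟨a, ha, hxa⟩ := hxa
          have haF := ha.mem heF
          obtain ⟨p, hp, hp1, hp2, hp3⟩ := ih y (by omega) (i.down _ _ hyz hzK) hyv hyne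
            (fun _ => by omega) ⟨z, ha.trans ((Conn.of_le hxF haF hxa).symm.trans
              (Conn.of_le hxF hzF hxz)), hyz⟩
          exact ⟨p, hp, hp1, (h1 z hzK hze hze' x y hxv hyv hxz hyz).trans hp2, hp3⟩
    have huK : u ∈ K := i.down _ _ hue heK
    have hwK : w ∈ K := i.down _ _ hwf hfK
    obtain ⟨p, hp, vp, pφ, a, ca, pa⟩ := descend _ u le_rfl huK huv hne'
      (fun h => hmax u ⟨huK, huv, h⟩) ⟨e, Conn.refl _, hue⟩
    have hfF : f ∈ FP A B := mem_FP.2 ⟨i.sub hfK, fun h => hvB (g.downB _ _ hvf h)⟩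
    obtain ⟨q, hq, vq, qφ, b, cb, qb⟩ := descend _ w le_rfl hwK hwv (by rintro rfl; omega)
      (fun h => hDw.le) ⟨f, (Conn.of_le hvF heF hve).symm.trans (Conn.of_le hvF hfF hvf), hwf⟩
    have hpq := phi_TP g r i heK heB h1 hp hq vp vq ca cb pa qb
    apply h2 u v huv hvv hue hve hne'
    rw [pφ, hpq, ← qφ]
    exact h1 f hfK hfe (Ne.symm hef) w v hwv hvv hwf hvf
  · exfalso
    push Not at hvx
    have : ∃ e ∈ K, e ∉ B := by
      by_contra hc
      push Not at hc
      exact hne (Subset.antisymm (fun x hx => ⟨i.sub hx, hc x hx⟩) i.sup)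
    obtain ⟨e, heK, heB⟩ := this
    have he : Edge e := by
      by_contra hc
      by_cases hs : Sq e
      · exact heB (hno e heK hs)
      · apply heB
        apply hvx e heK
        unfold Sq at hs; unfold Edge at hc; unfold Vtx
        omega
    obtain ⟨φ, h1, h2⟩ := jordan g r i hno he heK heB
    obtain ⟨v, hvv, hve⟩ := exists_vtx e
    obtain ⟨u, huv, hue, hne'⟩ : ∃ u, Vtx u ∧ Le u e ∧ u ≠ v := by
      unfold Edge at he; unfold Vtx at hvv; unfold Le I1 at hve
      refine ⟨(2 * e.1 - v.1, 2 * e.2 - v.2), ?_, ?_, ?_⟩ <;>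
      simp only [Vtx, Le, I1, ne_eq, Prod.ext_iff] <;> omega
    have huK : u ∈ K := i.down _ _ hue heK
    have hvK : v ∈ K := i.down _ _ hve heK
    exact h2 u v huv hvv hue hve hne' (phi_TP g r i heK heB h1 (hTP huK (hvx u huK huv))
      (hTP hvK (hvx v hvK hvv)) huv hvv (Conn.refl _) (Conn.refl _) hue hve)

theorem collapses (g : Good A B) (r : Reg A B) :
    Relation.ReflTransGen Collapse A (A ∩ B) := by
  have : ∀ n : ℕ, ∀ K, K.ncard ≤ n → Inv A B K → Relation.ReflTransGen Collapse A (A ∩ B) := by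
    intro n
    induction n with
    | zero =>
      intro K hK i
      by_cases h : K = A ∩ B
      · rw [← h]; exact i.col
      · obtain ⟨K', hK', i'⟩ := inv_step g r i h
        have := Set.ncard_lt_ncard hK' (g.finA.subset i.sub)
        omega
    | succ n ih =>
      intro K hK i
      by_cases h : K = A ∩ B
      · rw [← h]; exact i.col
      · obtain ⟨K', hK', i'⟩ := inv_step g r i h
        have := Set.ncard_lt_ncard hK' (g.finA.subset i.sub)
        exact ih K' (by omega) i'
  exact this _ A le_rfl (inv_init g r)

end ZL

namespace ZL

structure SDRF (X A : Set Plane) (H : Plane → ℝ → Plane) : Prop where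
  sub : A ⊆ X
  cont : ContinuousOn (fun q : Plane × ℝ => H q.1 q.2) (X ×ˢ Icc 0 1)
  maps : ∀ x ∈ X, ∀ t ∈ Icc (0:ℝ) 1, H x t ∈ X
  zero : ∀ x ∈ X, H x 0 = x
  one : ∀ x ∈ X, H x 1 ∈ A
  fix : ∀ x ∈ A, ∀ t ∈ Icc (0:ℝ) 1, H x t = x

def SDR' (X A : Set Plane) : Prop := ∃ H, SDRF X A H

lemma SDR'.toSDR {X A : Set Plane} (h : SDR' X A) : SDR X A := by
  obtain ⟨H, h⟩ := h
  refine ⟨⟨fun q => ⟨H q.1 q.2, h.maps _ q.1.2 _ q.2.2⟩, ?_⟩, ?_, ?_, ?_⟩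
  · refine Continuous.subtype_mk ?_ _
    exact h.cont.comp_continuous (f := fun q : X × unitInterval => ((q.1 : Plane), (q.2 : ℝ)))
      (by fun_prop) (fun q => ⟨q.1.2, q.2.2⟩)
  · intro x; apply Subtype.ext; exact h.zero _ x.2
  · intro x; exact h.one _ x.2
  · intro a ha t; apply Subtype.ext; exact h.fix _ ha _ t.2

lemma SDR'.refl (X : Set Plane) : SDR' X X :=
  ⟨fun x _ => x, subset_rfl, by fun_prop, fun x hx _ _ => hx, fun _ _ => rfl, fun _ h => h,
    fun _ _ _ _ => rfl⟩

lemma SDR'.trans {X Y Z : Set Plane} (hX : IsClosed X) (h1 : SDR' X Y) (h2 : SDR' Y Z) :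
    SDR' X Z := by
  classical
  obtain ⟨H, h⟩ := h1
  obtain ⟨J, j⟩ := h2
  have hmid : ∀ x ∈ X, H x 1 = J (H x 1) 0 := fun x hx => (j.zero _ (h.one x hx)).symm
  refine ⟨fun x t => if t ≤ 1/2 then H x (2*t) else J (H x 1) (2*t-1), j.sub.trans h.sub, ?_, ?_,
    ?_, ?_, ?_⟩
  · have e : X ×ˢ Icc (0:ℝ) 1 = X ×ˢ Icc (0:ℝ) (1/2) ∪ X ×ˢ Icc (1/2:ℝ) 1 := by
      rw [← prod_union, Icc_union_Icc_eq_Icc] <;> norm_num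
    rw [e]
    apply ContinuousOn.union_of_isClosed _ _ (hX.prod isClosed_Icc) (hX.prod isClosed_Icc)
    · have : ContinuousOn (fun q : Plane × ℝ => H q.1 (2*q.2)) (X ×ˢ Icc (0:ℝ) (1/2)) :=
        h.cont.comp (f := fun q : Plane × ℝ => (q.1, 2*q.2)) (by fun_prop) (by
          rintro ⟨x, t⟩ ⟨hx, ht⟩
          simp only [mem_Icc, mem_prod] at *
          exact ⟨hx, by linarith, by linarith⟩)
      refine this.congr ?_
      rintro ⟨x, t⟩ ⟨hx, ht⟩
      simp only [mem_Icc] at ht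
      exact if_pos ht.2
    · have h1c : ContinuousOn (fun q : Plane × ℝ => H q.1 1) (X ×ˢ Icc (1/2:ℝ) 1) :=
        h.cont.comp (f := fun q : Plane × ℝ => (q.1, (1:ℝ))) (by fun_prop) (by
          rintro ⟨x, t⟩ ⟨hx, ht⟩
          exact ⟨hx, by simp⟩)
      have : ContinuousOn (fun q : Plane × ℝ => J (H q.1 1) (2*q.2-1)) (X ×ˢ Icc (1/2:ℝ) 1) :=
        j.cont.comp (f := fun q : Plane × ℝ => (H q.1 1, 2*q.2-1)) (h1c.prodMk (by fun_prop)) (by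
          rintro ⟨x, t⟩ ⟨hx, ht⟩
          simp only [mem_Icc, mem_prod] at *
          exact ⟨h.one x hx, by linarith, by linarith⟩)
      refine this.congr ?_
      rintro ⟨x, t⟩ ⟨hx, ht⟩
      simp only [mem_Icc] at ht hx
      dsimp only
      split_ifs with hc
      · have : t = 1/2 := le_antisymm hc ht.1
        subst this
        norm_num
        exact hmid x hx
      · rfl
  · intro x hx t ht
    simp only [mem_Icc] at ht
    split_ifs with hc
    · exact h.maps _ hx _ ⟨by linarith, by linarith⟩
    · exact h.sub (j.maps _ (h.one _ hx) _ ⟨by linarith, by linarith⟩)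
  · intro x hx
    norm_num
    exact h.zero x hx
  · intro x hx
    norm_num
    exact j.one _ (h.one x hx)
  · intro x hx t ht
    simp only [mem_Icc] at ht
    have := h.fix x (j.sub hx)
    split_ifs with hc
    · exact this _ ⟨by linarith, by linarith⟩
    · rw [this _ ⟨by norm_num, le_rfl⟩]
      exact j.fix x hx _ ⟨by linarith, by linarith⟩

/-- extend a deformation by the identity on a closed set -/
lemma SDR'.glue {X Y : Set Plane} (hX : IsClosed X) (hY : IsClosed Y) (h : SDR' X (X ∩ Y)) :
    SDR' (X ∪ Y) Y := by
  classical
  obtain ⟨H, h⟩ := h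
  refine ⟨fun x t => if x ∈ Y then x else H x t, subset_union_right, ?_, ?_, ?_, ?_, ?_⟩
  · rw [union_prod]
    apply ContinuousOn.union_of_isClosed _ _ (hX.prod isClosed_Icc) (hY.prod isClosed_Icc)
    · refine h.cont.congr ?_
      rintro ⟨x, t⟩ ⟨hx, ht⟩
      dsimp only
      split_ifs with hc
      · exact (h.fix x ⟨hx, hc⟩ t ht).symm
      · rfl
    · refine (continuous_fst.continuousOn).congr ?_
      rintro ⟨x, t⟩ ⟨hx, ht⟩
      dsimp only at hx ⊢
      rw [if_pos hx]
  · intro x hx t ht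
    split_ifs with hc
    · exact hx
    · exact Or.inl (h.maps x (hx.resolve_right hc) t ht)
  · intro x hx
    split_ifs with hc
    · rfl
    · exact h.zero x (hx.resolve_right hc)
  · intro x hx
    split_ifs with hc
    · exact hc
    · exact (h.one x (hx.resolve_right hc)).2
  · intro x hx t _
    exact if_pos hx

/-- straight line deformation of a convex set -/
lemma SDR'.convex {Q L : Set Plane} (hQ : Convex ℝ Q) (hL : L ⊆ Q) (r : Plane → Plane)
    (hr : ContinuousOn r Q) (hrL : ∀ x ∈ Q, r x ∈ L) (hid : ∀ x ∈ L, r x = x) : SDR' Q L := by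
  refine ⟨fun x t => (1 - t) • x + t • r x, hL, ?_, ?_, ?_, ?_, ?_⟩
  · have : ContinuousOn (fun q : Plane × ℝ => r q.1) (Q ×ˢ Icc (0:ℝ) 1) :=
      hr.comp continuous_fst.continuousOn (fun q hq => hq.1)
    exact ((continuous_const.sub continuous_snd).smul continuous_fst).continuousOn.add
      (continuous_snd.continuousOn.smul this)
  · intro x hx t ht
    exact hQ hx (hL (hrL x hx)) (by linarith [ht.2]) ht.1 (by ring)
  · intro x _; simp
  · intro x hx; simpa using hrL x hx
  · intro x hx t _
    rw [hid x hx, ← add_smul]; simp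

lemma proj_aux {s w M : ℝ} (hs0 : 0 ≤ s) (hs1 : s ≤ 1) (hw : |w| ≤ 1)
    (hM : M = max (max (2 * |w|) (2 - s)) 1) :
    0 ≤ 2 + 2 / M * (s - 2) ∧ 2 + 2 / M * (s - 2) ≤ 1 ∧ |2 / M * w| ≤ 1 ∧
    (2 + 2 / M * (s - 2) = 0 ∨ 2 / M * w = 1 ∨ 2 / M * w = -1) := by
  have hM' : M = max (2 * |w|) (2 - s) := by
    rw [hM, max_eq_left]
    exact le_max_of_le_right (by linarith)
  have hM1 : 1 ≤ M := by rw [hM]; exact le_max_right _ _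
  have hMp : 0 < M := by linarith
  have ha : 2 * |w| ≤ M := by rw [hM']; exact le_max_left _ _
  have hb : 2 - s ≤ M := by rw [hM']; exact le_max_right _ _
  have hc : M ≤ 2 * (2 - s) := by rw [hM']; apply max_le <;> linarith
  have e : 2 + 2 / M * (s - 2) = (2 * M - 2 * (2 - s)) / M := by field_simp; ring
  have e2 : |2 / M * w| = 2 * |w| / M := by
    rw [abs_mul, abs_of_pos (by positivity)]; ring
  refine ⟨?_, ?_, ?_, ?_⟩
  · rw [e]; apply div_nonneg <;> linarith
  · rw [e, div_le_one hMp]; linarith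
  · rw [e2, div_le_one hMp]; exact ha
  · rcases max_choice (2 * |w|) (2 - s) with h | h
    · right
      have : |2 / M * w| = 1 := by
        rw [e2, div_eq_one_iff_eq hMp.ne', hM', h]
      exact eq_or_eq_neg_of_abs_eq this
    · left
      rw [e, hM', h]; simp

lemma rect (i j : Fin 2) (hij : i ≠ j) (l u : Plane) (hle : ∀ k, l k ≤ u k) (p q : ℝ)
    (hpq : (p = l i ∧ q = u i) ∨ (p = u i ∧ q = l i)) (hlt : l i < u i) :
    SDR' {x | ∀ k, l k ≤ x k ∧ x k ≤ u k}
      {x | (∀ k, l k ≤ x k ∧ x k ≤ u k) ∧ (x i = q ∨ (l j < u j ∧ (x j = l j ∨ x j = u j)))} := by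
  classical
  have hQ : Convex ℝ {x : Plane | ∀ k, l k ≤ x k ∧ x k ≤ u k} := by
    have : {x : Plane | ∀ k, l k ≤ x k ∧ x k ≤ u k} = Icc l u := by
      ext x; exact ⟨fun h => ⟨fun k => (h k).1, fun k => (h k).2⟩, fun h k => ⟨h.1 k, h.2 k⟩⟩
    rw [this]; exact convex_Icc l u
  have hall : ∀ {Φ : Fin 2 → Prop}, Φ i → Φ j → ∀ k, Φ k := by
    intro Φ hi hj k
    by_cases hk : k = i
    · exact hk ▸ hi
    · have : k = j := by omega
      exact this ▸ hj
  have hqm : l i ≤ q ∧ q ≤ u i := by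
    rcases hpq with ⟨h1, h2⟩ | ⟨h1, h2⟩ <;> subst h1 h2 <;> constructor <;> linarith
  by_cases hj : l j < u j
  · have hpq0 : p - q ≠ 0 := by
      rcases hpq with ⟨h1, h2⟩ | ⟨h1, h2⟩ <;> subst h1 h2
      · exact (sub_neg.2 hlt).ne
      · exact (sub_pos.2 hlt).ne'
    set d : ℝ := (u j - l j) / 2 with hd
    have hdp : 0 < d := by rw [hd]; linarith
    set m : ℝ := (u j + l j) / 2 with hm
    let s : Plane → ℝ := fun x => (x i - q) / (p - q)
    let w : Plane → ℝ := fun x => (x j - m) / d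
    let M : Plane → ℝ := fun x => max (max (2 * |w x|) (2 - s x)) 1
    have hMpos : ∀ x, M x ≠ 0 := fun x => (lt_of_lt_of_le one_pos (le_max_right _ _)).ne'
    let r : Plane → Plane := fun x k => if k = i then q + (2 + 2 / M x * (s x - 2)) * (p - q)
      else m + 2 / M x * w x * d
    have ri : ∀ x, r x i = q + (2 + 2 / M x * (s x - 2)) * (p - q) := fun x => if_pos rfl
    have rj : ∀ x, r x j = m + 2 / M x * w x * d := fun x => if_neg hij.symm
    have xs : ∀ x : Plane, x i = q + s x * (p - q) := fun x => by
      simp only [s]; field_simp; ring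
    have xw : ∀ x : Plane, x j = m + w x * d := fun x => by
      simp only [w]; field_simp; ring
    have cs : Continuous s := by simp only [s]; fun_prop
    have cw : Continuous w := by simp only [w]; fun_prop
    have cM : Continuous M := by simp only [M]; fun_prop
    have cM' : Continuous fun x => 2 / M x := continuous_const.div cM hMpos
    have cr : Continuous r := by
      refine continuous_pi (hall ?_ ?_)
      · simp only [ri]; fun_prop
      · simp only [rj]; fun_prop
    have hs : ∀ x : Plane, (l i ≤ x i ∧ x i ≤ u i) ↔ (0 ≤ s x ∧ s x ≤ 1) := by
      intro x
      rw [xs x]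
      rcases hpq with ⟨h1, h2⟩ | ⟨h1, h2⟩ <;> rw [h1, h2] <;> constructor <;> rintro ⟨h3, h4⟩ <;>
        constructor <;> nlinarith
    have hs' : ∀ t : ℝ, (l i ≤ q + t * (p - q) ∧ q + t * (p - q) ≤ u i) ↔ (0 ≤ t ∧ t ≤ 1) := by
      intro t
      rcases hpq with ⟨h1, h2⟩ | ⟨h1, h2⟩ <;> rw [h1, h2] <;> constructor <;> rintro ⟨h3, h4⟩ <;>
        constructor <;> nlinarith
    have hw' : ∀ t : ℝ, (l j ≤ m + t * d ∧ m + t * d ≤ u j) ↔ |t| ≤ 1 := by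
      intro t
      rw [abs_le]
      have e1 : l j = m - d := by rw [hm, hd]; ring
      have e2 : u j = m + d := by rw [hm, hd]; ring
      rw [e1, e2]
      constructor <;> rintro ⟨h3, h4⟩ <;> constructor <;> nlinarith
    refine SDR'.convex hQ (fun x hx => hx.1) r cr.continuousOn ?_ ?_
    · intro x hx
      have h1 := (hs x).1 (hx i)
      have h2 := (hw' (w x)).1 (by rw [← xw]; exact hx j)
      obtain ⟨k1, k2, k3, k4⟩ := proj_aux h1.1 h1.2 h2 (M := M x) rfl
      refine ⟨hall ?_ ?_, ?_⟩
      · rw [ri]; exact (hs' _).2 ⟨k1, k2⟩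
      · rw [rj]; exact (hw' _).2 k3
      · rw [ri, rj]
        rcases k4 with h | h | h
        · left; rw [h]; ring
        · right; refine ⟨hj, Or.inr ?_⟩; rw [h, hm, hd]; ring
        · right; refine ⟨hj, Or.inl ?_⟩; rw [h, hm, hd]; ring
    · rintro x ⟨hx, hx'⟩
      have h1 := (hs x).1 (hx i)
      have h2 := (hw' (w x)).1 (by rw [← xw]; exact hx j)
      have hM : M x = 2 := by
        simp only [M]
        rcases hx' with h | ⟨-, h⟩
        · have : s x = 0 := by simp only [s]; rw [h]; simp
          rw [this, max_eq_left, max_eq_right] <;> [norm_num; linarith; (apply le_max_of_le_right; norm_num)]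
        · have : |w x| = 1 := by
            have hd2 : d ≠ 0 := hdp.ne'
            rcases h with h | h
            · have : w x = -1 := by
                simp only [w]; rw [h, div_eq_iff hd2, hm, hd]; ring
              rw [this]; simp
            · have : w x = 1 := by
                simp only [w]; rw [h, div_eq_iff hd2, hm, hd]; ring
              rw [this]; simp
          rw [this, max_eq_left, max_eq_left] <;> [norm_num; linarith; (apply le_max_of_le_left; norm_num)]
      funext k
      revert k
      apply hall
      · rw [ri, hM, xs x]; ring
      · rw [rj, hM, xw x]; ring
  · refine SDR'.convex hQ (fun x hx => hx.1) (fun x => Function.update x i q) ?_ ?_ ?_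
    · exact (continuous_id.update i continuous_const).continuousOn
    · intro x hx
      refine ⟨hall ?_ ?_, Or.inl (by simp)⟩
      · simpa using hqm
      · rw [Function.update_of_ne hij.symm]; exact hx j
    · rintro x ⟨hx, hx' | hx'⟩
      · rw [← hx']; simp
      · exact absurd hx'.1 hj

end ZL

namespace ZL

structure Grid where
  a : ℤ → ℝ
  idx : ℝ → ℤ
  mono : StrictMono a
  h1 : ∀ i y, 2 * i ≤ idx y ↔ a i ≤ y
  h2 : ∀ i y, idx y ≤ 2 * i ↔ y ≤ a i

namespace Grid

theorem exists_grid (a : ℤ → ℝ) (mono : StrictMono a) (hu : ∀ y, ∃ i, y < a i)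
    (hl : ∀ y, ∃ i, a i ≤ y) : ∃ g : Grid, g.a = a := by
  classical
  have key : ∀ y, ∃ i, a i ≤ y ∧ y < a (i + 1) := by
    intro y
    obtain ⟨b, hb⟩ := hu y
    obtain ⟨i, hi, hi'⟩ := Int.exists_greatest_of_bdd (P := fun i => a i ≤ y)
      ⟨b, fun z hz => (mono.lt_iff_lt.1 (lt_of_le_of_lt hz hb)).le⟩ (hl y)
    refine ⟨i, hi, ?_⟩
    by_contra hc
    have := hi' (i + 1) (not_lt.1 hc)
    omega
  choose f hf1 hf2 using key
  refine ⟨⟨a, fun y => if a (f y) = y then 2 * f y else 2 * f y + 1, mono, ?_, ?_⟩, rfl⟩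
  · intro i y
    have : a i ≤ y ↔ i ≤ f y := by
      constructor
      · intro h
        have := mono.lt_iff_lt.1 (lt_of_le_of_lt h (hf2 y))
        omega
      · intro h; exact (mono.monotone h).trans (hf1 y)
    rw [this]
    split_ifs <;> omega
  · intro i y
    split_ifs with h
    · nth_rewrite 2 [← h]
      rw [mono.le_iff_le]
      omega
    · have hlt := lt_of_le_of_ne (hf1 y) h
      constructor
      · intro h'
        exact (hf2 y).le.trans (mono.monotone (by omega))
      · intro h'
        have := mono.lt_iff_lt.1 (lt_of_lt_of_le hlt h')
        omega

variable (g : Grid)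

lemma h1' (i y) : g.idx y < 2 * i ↔ y < g.a i := by
  rw [← not_le, ← not_le, g.h1]

lemma h2' (i y) : 2 * i < g.idx y ↔ g.a i < y := by
  rw [← not_le, ← not_le, g.h2]

lemma idx_even (i y) : g.idx y = 2 * i ↔ y = g.a i := by
  rw [le_antisymm_iff, le_antisymm_iff, g.h1, g.h2]

lemma idx_odd (i y) : g.idx y = 2 * i + 1 ↔ g.a i < y ∧ y < g.a (i + 1) := by
  rw [← g.h2', ← g.h1']; omega

lemma I1_left (y : ℝ) (m : ℤ) : I1 (g.idx y) m ↔ g.a (m / 2) ≤ y ∧ y ≤ g.a ((m + 1) / 2) := by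
  rw [← g.h1, ← g.h2]; unfold I1; omega

lemma I1_right (y : ℝ) (m : ℤ) : I1 m (g.idx y) ↔ g.a ((m - 1) / 2) < y ∧ y < g.a (m / 2 + 1) := by
  rw [← g.h1', ← g.h2']; unfold I1; omega

lemma isOpen_star1 (m : ℤ) : IsOpen {y | I1 m (g.idx y)} := by
  have : {y | I1 m (g.idx y)} = Ioo (g.a ((m - 1) / 2)) (g.a (m / 2 + 1)) := by
    ext y; exact g.I1_right y m
  rw [this]; exact isOpen_Ioo

lemma even_or_odd' (m : ℤ) : (∃ i, m = 2 * i) ∨ ∃ i, m = 2 * i + 1 := by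
  rcases Int.emod_two_eq_zero_or_one m with h | h
  · exact Or.inl ⟨m / 2, by omega⟩
  · exact Or.inr ⟨m / 2, by omega⟩

lemma seg1 {y z t : ℝ} (h : I1 (g.idx y) (g.idx z)) (ht : 0 < t) (ht1 : t ≤ 1) :
    g.idx ((1 - t) * y + t * z) = g.idx z := by
  obtain ⟨i, hi⟩ | ⟨i, hi⟩ := even_or_odd' (g.idx z)
  · have hy : g.idx y = 2 * i := by unfold I1 at h; omega
    rw [hi]
    rw [idx_even] at *
    rw [hi, hy]; ring
  · rw [I1_left, hi] at h
    rw [hi]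
    rw [idx_odd] at *
    have e1 : (2 * i + 1) / 2 = i := by omega
    have e2 : (2 * i + 1 + 1) / 2 = i + 1 := by omega
    rw [e1, e2] at h
    constructor <;> nlinarith

lemma cell1_infinite {m : ℤ} (h : m % 2 = 1) : {y | g.idx y = m}.Infinite := by
  obtain ⟨i, hi⟩ | ⟨i, hi⟩ := even_or_odd' m
  · omega
  · have : {y | g.idx y = m} = Ioo (g.a i) (g.a (i + 1)) := by
      ext y; rw [hi]; exact g.idx_odd i y
    rw [this]; exact Ioo_infinite (g.mono (by omega))

lemma exists_pt1 (m : ℤ) : ∃ y, g.idx y = m := by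
  obtain ⟨i, hi⟩ | ⟨i, hi⟩ := even_or_odd' m
  · exact ⟨g.a i, by rw [hi, idx_even]⟩
  · exact (g.cell1_infinite (m := m) (by omega)).nonempty

def c (x : Plane) : Cell := (g.idx (x 0), g.idx (x 1))

def R (S : Set Cell) : Set Plane := {x | g.c x ∈ S}

lemma mem_R {S : Set Cell} {x : Plane} : x ∈ g.R S ↔ g.c x ∈ S := Iff.rfl

lemma exists_pt (s : Cell) : ∃ x, g.c x = s := by
  obtain ⟨y, hy⟩ := g.exists_pt1 s.1
  obtain ⟨z, hz⟩ := g.exists_pt1 s.2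
  exact ⟨![y, z], by simp [c, hy, hz]⟩

lemma isOpen_star (s : Cell) : IsOpen {x | Le s (g.c x)} := by
  have h0 : IsOpen {x : Plane | I1 s.1 (g.idx (x 0))} :=
    (g.isOpen_star1 s.1).preimage (f := fun x : Plane => x 0) (by fun_prop)
  have h1 : IsOpen {x : Plane | I1 s.2 (g.idx (x 1))} :=
    (g.isOpen_star1 s.2).preimage (f := fun x : Plane => x 1) (by fun_prop)
  exact h0.inter h1

lemma isClosed_R {S : Set Cell} (hS : Down S) : IsClosed (g.R S) := by
  rw [← isOpen_compl_iff, isOpen_iff_mem_nhds]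
  intro x hx
  refine Filter.mem_of_superset ((g.isOpen_star (g.c x)).mem_nhds (Le.refl _)) ?_
  intro y hy hy'
  exact hx (hS _ _ hy hy')

lemma seg {x y : Plane} (h : Le (g.c x) (g.c y)) {t : ℝ} (ht : 0 < t) (ht1 : t ≤ 1) :
    g.c ((1 - t) • x + t • y) = g.c y := by
  have := g.seg1 h.1 ht ht1
  have := g.seg1 h.2 ht ht1
  simp [c, *]

lemma mem_closure_cell {x : Plane} {s : Cell} (h : Le (g.c x) s) : x ∈ closure {y | g.c y = s} := by
  obtain ⟨y, rfl⟩ := g.exists_pt s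
  have hc : Continuous fun t : ℝ => (1 - t) • x + t • y := by fun_prop
  have h0 : Filter.Tendsto (fun t : ℝ => (1 - t) • x + t • y) (nhdsWithin 0 (Ioi 0)) (nhds x) := by
    have := hc.tendsto 0
    simp only [sub_zero, one_smul, zero_smul, add_zero] at this
    exact this.mono_left nhdsWithin_le_nhds
  refine mem_closure_of_tendsto h0 ?_
  filter_upwards [Ioc_mem_nhdsGT (show (0:ℝ) < 1 by norm_num)] with t ht
  exact g.seg h ht.1 ht.2

lemma comp_of_le {S : Set Cell} {x y : Plane} (hx : x ∈ g.R S) (hy : y ∈ g.R S)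
    (h : Le (g.c x) (g.c y)) : connectedComponentIn (g.R S) x = connectedComponentIn (g.R S) y := by
  have hsub : segment ℝ x y ⊆ g.R S := by
    rw [segment_eq_image]
    rintro _ ⟨t, ht, rfl⟩
    rcases ht.1.eq_or_lt with h0 | h0
    · subst h0; simpa using hx
    · rw [mem_R]
      dsimp only
      rw [g.seg h h0 ht.2]; exact hy
  have := (convex_segment x y).isPreconnected.subset_connectedComponentIn
    (left_mem_segment ℝ x y) hsub (right_mem_segment ℝ x y)
  exact connectedComponentIn_eq this

lemma comp_of_conn {S : Set Cell} {x : Plane} (hx : x ∈ g.R S) {t : Cell} (h : Conn S (g.c x) t) :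
    ∀ y, g.c y = t → connectedComponentIn (g.R S) x = connectedComponentIn (g.R S) y := by
  induction h with
  | refl =>
    intro y hy
    exact g.comp_of_le hx (by rw [mem_R, hy]; exact hx) (by rw [hy]; exact Le.refl _)
  | @tail b d _ h ih =>
    intro y hy
    obtain ⟨z, hz⟩ := g.exists_pt b
    rw [ih z hz]
    have hzS : z ∈ g.R S := by rw [mem_R, hz]; exact h.1
    have hyS : y ∈ g.R S := by rw [mem_R, hy]; exact h.2.1
    rcases h.2.2 with h' | h'
    · exact g.comp_of_le hzS hyS (by rw [hz, hy]; exact h')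
    · exact (g.comp_of_le hyS hzS (by rw [hz, hy]; exact h')).symm

lemma conn_of_comp {S : Set Cell} {x y : Plane} (hx : x ∈ g.R S)
    (h : y ∈ connectedComponentIn (g.R S) x) : Conn S (g.c x) (g.c y) := by
  by_contra hc
  have hsub := connectedComponentIn_subset (g.R S) x
  have hpre : IsPreconnected (connectedComponentIn (g.R S) x) := isPreconnected_connectedComponentIn
  obtain ⟨z, hz, hzU, hzV⟩ := hpre (⋃ s ∈ {s | Conn S (g.c x) s}, {x | Le s (g.c x)})
    (⋃ s ∈ {s | s ∈ S ∧ ¬ Conn S (g.c x) s}, {x | Le s (g.c x)})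
    (isOpen_biUnion fun s _ => g.isOpen_star s) (isOpen_biUnion fun s _ => g.isOpen_star s) (by
      intro z hz
      by_cases hcz : Conn S (g.c x) (g.c z)
      · left; exact mem_biUnion (x := g.c z) hcz (Le.refl _)
      · right; exact mem_biUnion (x := g.c z) ⟨hsub hz, hcz⟩ (Le.refl _))
    ⟨x, mem_connectedComponentIn hx, mem_biUnion (x := g.c x) (Conn.refl _) (Le.refl _)⟩
    ⟨y, h, mem_biUnion (x := g.c y) ⟨hsub h, hc⟩ (Le.refl _)⟩
  simp only [mem_iUnion, exists_prop] at hzU hzV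
  obtain ⟨s, hs, hsz⟩ := hzU
  obtain ⟨s', ⟨hs'S, hs'⟩, hsz'⟩ := hzV
  have hzS : g.c z ∈ S := hsub hz
  exact hs' (Conn.trans hs ((Conn.of_le (hs.mem hx) hzS hsz).trans (Conn.of_le hs'S hzS hsz').symm))

lemma cell_infinite {s : Cell} (h : ¬ Vtx s) : {x | g.c x = s}.Infinite := by
  by_cases h0 : s.1 % 2 = 1
  · obtain ⟨z, hz⟩ := g.exists_pt1 s.2
    have := (g.cell1_infinite h0).image (f := fun y => (![y, z] : Plane)) (by
      intro a _ b _ hab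
      exact congrFun hab 0)
    refine this.mono ?_
    rintro _ ⟨y, hy, rfl⟩
    have hy' : g.idx y = s.1 := hy
    simp [c, hy', hz]
  · have h1 : s.2 % 2 = 1 := by unfold Vtx at h; omega
    obtain ⟨z, hz⟩ := g.exists_pt1 s.1
    have := (g.cell1_infinite h1).image (f := fun y => (![z, y] : Plane)) (by
      intro a _ b _ hab
      exact congrFun hab 1)
    refine this.mono ?_
    rintro _ ⟨y, hy, rfl⟩
    have hy' : g.idx y = s.2 := hy
    simp [c, hy', hz]

lemma touch_ex {S S' : Set Cell} {s : Cell} (hs : s ∈ S)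
    (h : ∀ C, IsCompOf C (g.R S) → ∃! T, IsCompOf T (g.R S') ∧ SharesEdge T C) :
    WTouch S S' s := by
  obtain ⟨x, rfl⟩ := g.exists_pt s
  obtain ⟨T, ⟨⟨p, hp, rfl⟩, hT⟩, -⟩ := h _ ⟨x, hs, rfl⟩
  obtain ⟨z, hzT, hzC⟩ := hT.nonempty
  have ho := g.isOpen_star (g.c z)
  obtain ⟨y, hy, hyC⟩ := mem_closure_iff.1 hzC _ ho (Le.refl _)
  obtain ⟨y', hy', hyT⟩ := mem_closure_iff.1 hzT _ ho (Le.refl _)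
  have hyS : y' ∈ g.R S' := connectedComponentIn_subset _ _ hyT
  exact ⟨g.c z, g.c y, g.c y', hy, hy', g.conn_of_comp hs hyC, hyS⟩

lemma cell_sub_comp {S : Set Cell} {x : Plane} (hx : x ∈ g.R S) {t : Cell} (h : Conn S (g.c x) t) :
    {y | g.c y = t} ⊆ connectedComponentIn (g.R S) x := by
  intro y hy
  rw [g.comp_of_conn hx h y hy]
  apply mem_connectedComponentIn
  rw [mem_R, show g.c y = t from hy]
  exact h.mem hx

lemma shares {S S' : Set Cell} {x y : Plane} (hx : x ∈ g.R S) (hy : y ∈ g.R S')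
    (h : STouch S S' (g.c x) (g.c y)) :
    SharesEdge (connectedComponentIn (g.R S') y) (connectedComponentIn (g.R S) x) := by
  obtain ⟨v, t, t', hv, hvt, hvt', h1, h2⟩ := h
  refine (g.cell_infinite hv).mono ?_
  intro z hz
  have hz' : g.c z = v := hz
  refine ⟨closure_mono (g.cell_sub_comp hy h2) (g.mem_closure_cell (by rw [hz']; exact hvt')),
    closure_mono (g.cell_sub_comp hx h1) (g.mem_closure_cell (by rw [hz']; exact hvt))⟩

lemma touch_un {S S' : Set Cell} {s p q : Cell} (hs : s ∈ S) (hp : p ∈ S') (hq : q ∈ S')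
    (h : ∀ C, IsCompOf C (g.R S) → ∃! T, IsCompOf T (g.R S') ∧ SharesEdge T C)
    (h1 : STouch S S' s p) (h2 : STouch S S' s q) : Conn S' p q := by
  obtain ⟨x, rfl⟩ := g.exists_pt s
  obtain ⟨y, rfl⟩ := g.exists_pt p
  obtain ⟨z, rfl⟩ := g.exists_pt q
  have := (h _ ⟨x, hs, rfl⟩).unique ⟨⟨y, hp, rfl⟩, g.shares hs hp h1⟩ ⟨⟨z, hq, rfl⟩, g.shares hs hq h2⟩
  apply g.conn_of_comp hp
  rw [this]
  exact mem_connectedComponentIn hq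

lemma collapse_box (i j : Fin 2) (hij : i ≠ j) (σ τ : Fin 2 → ℤ) (hi : σ i % 2 = 1)
    (ht : τ i = σ i + 1 ∨ τ i = σ i - 1) (hj : τ j = σ j) :
    SDR' {x | ∀ k, I1 (g.idx (x k)) (σ k)}
      {x | (∀ k, I1 (g.idx (x k)) (σ k)) ∧ ¬ (∀ k, g.idx (x k) = σ k) ∧
        ¬ (∀ k, g.idx (x k) = τ k)} := by
  have hall : ∀ {Φ : Fin 2 → Prop}, (∀ k, Φ k) ↔ Φ i ∧ Φ j := by
    intro Φ
    refine ⟨fun h => ⟨h i, h j⟩, fun h k => ?_⟩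
    by_cases hk : k = i
    · exact hk ▸ h.1
    · have : k = j := by omega
      exact this ▸ h.2
  obtain ⟨o, ho, ho'⟩ : ∃ o : ℤ, o % 2 = 0 ∧ ((τ i = σ i + 1 ∧ o = σ i - 1) ∨
      (τ i = σ i - 1 ∧ o = σ i + 1)) := by
    rcases ht with h | h
    · exact ⟨σ i - 1, by omega, Or.inl ⟨h, rfl⟩⟩
    · exact ⟨σ i + 1, by omega, Or.inr ⟨h, rfl⟩⟩
  have := rect i j hij (fun k => g.a (σ k / 2)) (fun k => g.a ((σ k + 1) / 2))
    (fun k => g.mono.monotone (by omega)) (g.a (τ i / 2)) (g.a (o / 2)) (by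
      rcases ho' with ⟨h1, h2⟩ | ⟨h1, h2⟩
      · right; constructor <;> congr 1 <;> omega
      · left; constructor <;> congr 1 <;> omega) (g.mono (by omega))
  simp only [← g.I1_left] at this
  convert this using 1
  ext x
  refine and_congr_right fun hx => ?_
  have hxi := hx i
  have hxj := hx j
  rw [hall, hall, ← g.idx_even, ← g.idx_even, ← g.idx_even, g.mono.lt_iff_lt]
  unfold I1 at hxi hxj
  omega

lemma collapse_sdr {K K' : Set Cell} (h : Collapse K K') : SDR' (g.R K) (g.R K') := by
  obtain ⟨hK, hK', s, t, ⟨hs, hc, hf⟩, rfl⟩ := h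
  have hts : Le t s := by unfold Codim at hc; unfold Le I1; omega
  have hLe : ∀ x, (∀ k, I1 (g.idx (x k)) ((![s.1, s.2] : Fin 2 → ℤ) k)) ↔ Le (g.c x) s := by
    intro x; rw [Fin.forall_fin_two]; rfl
  have hEq : ∀ (x : Plane) (r : Cell), (∀ k, g.idx (x k) = (![r.1, r.2] : Fin 2 → ℤ) k) ↔ g.c x = r := by
    intro x r; rw [Fin.forall_fin_two, Prod.ext_iff]; rfl
  have hQ : IsClosed {x | Le (g.c x) s} := by
    apply g.isClosed_R (S := {r | Le r s})
    intro a b hab hb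
    exact hab.trans hb
  have key : SDR' {x | Le (g.c x) s} ({x | Le (g.c x) s} ∩ g.R (K \ {s, t})) := by
    have : SDR' {x | ∀ k, I1 (g.idx (x k)) ((![s.1, s.2] : Fin 2 → ℤ) k)}
      {x | (∀ k, I1 (g.idx (x k)) ((![s.1, s.2] : Fin 2 → ℤ) k)) ∧
        ¬ (∀ k, g.idx (x k) = (![s.1, s.2] : Fin 2 → ℤ) k) ∧
        ¬ (∀ k, g.idx (x k) = (![t.1, t.2] : Fin 2 → ℤ) k)} := by
      by_cases h1 : t.2 = s.2
      · apply g.collapse_box 0 1 (by decide) ![s.1, s.2] ![t.1, t.2] <;>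
        simp <;> unfold Codim at hc <;> omega
      · apply g.collapse_box 1 0 (by decide) ![s.1, s.2] ![t.1, t.2] <;>
        simp <;> unfold Codim at hc <;> omega
    simp only [hLe, hEq] at this
    convert this using 1
    ext x
    refine and_congr_right fun hx => ?_
    rw [mem_R]
    have : g.c x ∈ K := hK _ _ hx hs
    simp [this]
  have := SDR'.glue hQ (g.isClosed_R hK') key
  convert this using 1
  ext x
  constructor
  · intro hx
    by_cases h : g.c x ∈ ({s, t} : Set Cell)
    · left
      rcases h with h | h
      · show Le _ _
        rw [h]; exact Le.refl _
      · show Le _ _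
        rw [show g.c x = t from h]; exact hts
    · right; exact ⟨hx, h⟩
  · rintro (hx | hx)
    · exact hK _ _ hx hs
    · exact hx.1

lemma collapses_sdr {K K' : Set Cell} (hK : Down K) (h : Relation.ReflTransGen Collapse K K') :
    SDR' (g.R K) (g.R K') := by
  induction h with
  | refl => exact SDR'.refl _
  | tail _ h ih => exact ih.trans (g.isClosed_R hK) (g.collapse_sdr h)

end Grid

end ZL

namespace ZL

def off (ε : ℝ) (r : ℤ) : ℝ := if r = 0 then -(2 * ε) else if r = 1 then -ε else if r = 2 then ε
  else 2 * ε

def ga (ε : ℝ) (m : ℤ) : ℝ := ((m / 4 : ℤ) : ℝ) + off ε (m % 4)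

lemma ga_eq (ε : ℝ) {m k r : ℤ} (h : m = 4 * k + r) (h0 : 0 ≤ r) (h1 : r < 4) :
    ga ε m = k + off ε r := by
  have e1 : m / 4 = k := by omega
  have e2 : m % 4 = r := by omega
  rw [ga, e1, e2]

lemma ga_mono {ε : ℝ} (h0 : 0 < ε) (h1 : ε < 1 / 4) : StrictMono (ga ε) := by
  apply strictMono_int_of_lt_succ
  intro m
  have hr : m % 4 = 0 ∨ m % 4 = 1 ∨ m % 4 = 2 ∨ m % 4 = 3 := by omega
  rcases hr with h | h | h | h
  · rw [ga_eq ε (show m = 4 * (m / 4) + 0 by omega) (by norm_num) (by norm_num),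
      ga_eq ε (show m + 1 = 4 * (m / 4) + 1 by omega) (by norm_num) (by norm_num)]
    norm_num [off]; linarith
  · rw [ga_eq ε (show m = 4 * (m / 4) + 1 by omega) (by norm_num) (by norm_num),
      ga_eq ε (show m + 1 = 4 * (m / 4) + 2 by omega) (by norm_num) (by norm_num)]
    norm_num [off]; linarith
  · rw [ga_eq ε (show m = 4 * (m / 4) + 2 by omega) (by norm_num) (by norm_num),
      ga_eq ε (show m + 1 = 4 * (m / 4) + 3 by omega) (by norm_num) (by norm_num)]
    norm_num [off]; linarith
  · rw [ga_eq ε (show m = 4 * (m / 4) + 3 by omega) (by norm_num) (by norm_num),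
      ga_eq ε (show m + 1 = 4 * (m / 4 + 1) + 0 by omega) (by norm_num) (by norm_num)]
    norm_num [off]; linarith

lemma exists_gridε {ε : ℝ} (h0 : 0 < ε) (h1 : ε < 1 / 4) : ∃ g : Grid, g.a = ga ε := by
  apply Grid.exists_grid _ (ga_mono h0 h1)
  · intro y
    obtain ⟨n, hn⟩ := exists_int_gt y
    refine ⟨4 * n + 2, ?_⟩
    rw [ga_eq ε rfl (by norm_num) (by norm_num)]
    norm_num [off]; linarith
  · intro y
    obtain ⟨n, hn⟩ := exists_int_lt y
    refine ⟨4 * n + 1, ?_⟩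
    rw [ga_eq ε rfl (by norm_num) (by norm_num)]
    norm_num [off]; linarith

lemma clamp_ex {δ b y : ℝ} (hδ : 0 ≤ δ) :
    (∃ x, (b - 1 ≤ x ∧ x ≤ b) ∧ |x - y| ≤ δ) ↔ b - 1 - δ ≤ y ∧ y ≤ b + δ := by
  constructor
  · rintro ⟨x, h, h'⟩
    rw [abs_le] at h'
    constructor <;> linarith
  · rintro ⟨h1, h2⟩
    refine ⟨max (b - 1) (min b y), ⟨le_max_left _ _, max_le (by linarith) (min_le_left _ _)⟩, ?_⟩
    rw [abs_le]
    rcases le_total b y with h | h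
    · rw [min_eq_left h, max_eq_right (by linarith)]
      constructor <;> linarith
    · rw [min_eq_right h]
      rcases le_total (b - 1) y with h' | h'
      · rw [max_eq_right h']; constructor <;> linarith
      · rw [max_eq_left h']; constructor <;> linarith

lemma mem_thick {δ : ℝ} (hδ : 0 ≤ δ) (S : Set (ℕ × ℕ)) (y : Plane) :
    y ∈ thick δ (fg S) ↔ ∃ p ∈ S, ((p.1 : ℝ) - 1 - δ ≤ y 0 ∧ y 0 ≤ p.1 + δ) ∧
      ((p.2 : ℝ) - 1 - δ ≤ y 1 ∧ y 1 ≤ p.2 + δ) := by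
  have hn : ∀ x : Plane, ‖x - y‖ ≤ δ ↔ |x 0 - y 0| ≤ δ ∧ |x 1 - y 1| ≤ δ := by
    intro x
    rw [pi_norm_le_iff_of_nonneg hδ, Fin.forall_fin_two]; rfl
  constructor
  · rintro ⟨x, hx, hxy⟩
    obtain ⟨p, hp, hxp⟩ := mem_iUnion₂.1 hx
    rw [hn] at hxy
    exact ⟨p, hp, (clamp_ex hδ).1 ⟨x 0, hxp.1, hxy.1⟩, (clamp_ex hδ).1 ⟨x 1, hxp.2, hxy.2⟩⟩
  · rintro ⟨p, hp, h0, h1⟩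
    obtain ⟨u, hu, hu'⟩ := (clamp_ex hδ).2 h0
    obtain ⟨v, hv, hv'⟩ := (clamp_ex hδ).2 h1
    refine ⟨![u, v], mem_iUnion₂.2 ⟨p, hp, ?_⟩, (hn _).2 ?_⟩
    · exact ⟨by simpa using hu, by simpa using hv⟩
    · exact ⟨by simpa using hu', by simpa using hv'⟩

def KS (S : Set (ℕ × ℕ)) (α β : ℤ) : Set Cell :=
  {s | ∃ p ∈ S, (8 * (p.1 : ℤ) - α ≤ s.1 ∧ s.1 ≤ 8 * (p.1 : ℤ) + β) ∧
    (8 * (p.2 : ℤ) - α ≤ s.2 ∧ s.2 ≤ 8 * (p.2 : ℤ) + β)}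

lemma thickA {ε : ℝ} (h0 : 0 < ε) (g : Grid) (hg : g.a = ga ε) (S : Set (ℕ × ℕ)) :
    thick ε (fg S) = g.R (KS S 6 4) := by
  have e1 : ∀ n : ℕ, ga ε (4 * n - 3) = (n : ℝ) - 1 - ε := by
    intro n
    rw [ga_eq ε (show (4 * (n : ℤ) - 3) = 4 * ((n : ℤ) - 1) + 1 by ring) (by norm_num) (by norm_num)]
    norm_num [off]; ring
  have e2 : ∀ n : ℕ, ga ε (4 * n + 2) = (n : ℝ) + ε := by
    intro n
    rw [ga_eq ε rfl (by norm_num) (by norm_num)]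
    norm_num [off]
  ext y
  rw [mem_thick h0.le, Grid.mem_R]
  refine exists_congr fun p => and_congr_right fun _ => ?_
  rw [← e1, ← e2, ← e1, ← e2, ← hg, ← g.h1, ← g.h1, ← g.h2, ← g.h2]
  simp only [Grid.c]
  omega

lemma thickB {ε : ℝ} (h0 : 0 < ε) (g : Grid) (hg : g.a = ga ε) (S : Set (ℕ × ℕ)) :
    thick (2 * ε) (fg S) = g.R (KS S 8 6) := by
  have e1 : ∀ n : ℕ, ga ε (4 * n - 4) = (n : ℝ) - 1 - 2 * ε := by
    intro n
    rw [ga_eq ε (show (4 * (n : ℤ) - 4) = 4 * ((n : ℤ) - 1) + 0 by ring) (by norm_num) (by norm_num)]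
    norm_num [off]; ring
  have e2 : ∀ n : ℕ, ga ε (4 * n + 3) = (n : ℝ) + 2 * ε := by
    intro n
    rw [ga_eq ε rfl (by norm_num) (by norm_num)]
    norm_num [off]
  ext y
  rw [mem_thick (by linarith), Grid.mem_R]
  refine exists_congr fun p => and_congr_right fun _ => ?_
  rw [← e1, ← e2, ← e1, ← e2, ← hg, ← g.h1, ← g.h1, ← g.h2, ← g.h2]
  simp only [Grid.c]
  omega

lemma KS_finite {S : Set (ℕ × ℕ)} {h w : ℕ} (hS : OnGrid S h w) (α β : ℤ) : (KS S α β).Finite := by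
  refine Set.Finite.subset ((Set.finite_Icc (8 - α) (8 * (h : ℤ) + β)).prod
    (Set.finite_Icc (8 - α) (8 * (w : ℤ) + β))) ?_
  rintro ⟨m, n⟩ ⟨p, hp, h1, h2⟩
  have := hS hp
  simp only [mem_prod, mem_Icc] at this h1 h2 ⊢
  omega

lemma KS_down (S : Set (ℕ × ℕ)) {α β : ℤ} (hα : α % 2 = 0) (hβ : β % 2 = 0) : Down (KS S α β) := by
  rintro s t ⟨h1, h2⟩ ⟨p, hp, h3, h4⟩
  refine ⟨p, hp, ?_, ?_⟩
  · clear h2 h4; unfold I1 at h1; omega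
  · clear h1 h3; unfold I1 at h2; omega

lemma KS_congr1 {S : Set (ℕ × ℕ)} {α β m m' n : ℤ}
    (h : ∀ k : ℤ, (8 * k - α ≤ m ∧ m ≤ 8 * k + β) ↔ (8 * k - α ≤ m' ∧ m' ≤ 8 * k + β)) :
    (m, n) ∈ KS S α β ↔ (m', n) ∈ KS S α β := by
  refine exists_congr fun p => and_congr_right fun _ => ?_
  simp only [h]

lemma KS_congr2 {S : Set (ℕ × ℕ)} {α β m n n' : ℤ}
    (h : ∀ k : ℤ, (8 * k - α ≤ n ∧ n ≤ 8 * k + β) ↔ (8 * k - α ≤ n' ∧ n' ≤ 8 * k + β)) :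
    (m, n) ∈ KS S α β ↔ (m, n') ∈ KS S α β := by
  refine exists_congr fun p => and_congr_right fun _ => ?_
  simp only [h]

lemma rhoA (m k : ℤ) : (8 * k - 6 ≤ m ∧ m ≤ 8 * k + 4) ↔ (8 * k - 6 ≤ rho m ∧ rho m ≤ 8 * k + 4) := by
  unfold rho; split_ifs <;> omega

lemma rhoB (m k : ℤ) : (8 * k - 8 ≤ m ∧ m ≤ 8 * k + 6) ↔ (8 * k - 8 ≤ rho m ∧ rho m ≤ 8 * k + 6) := by
  unfold rho; split_ifs <;> omega

lemma good {P G : Set (ℕ × ℕ)} {h w : ℕ} (hP : OnGrid P h w) (hG : OnGrid G h w) :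
    Good (KS P 6 4) (KS G 8 6) where
  finA := KS_finite hP _ _
  finB := KS_finite hG _ _
  downA := KS_down _ (by norm_num) (by norm_num)
  downB := KS_down _ (by norm_num) (by norm_num)
  rhoA1 m n := KS_congr1 (rhoA m)
  rhoA2 m n := KS_congr2 (rhoA n)
  rhoB1 m n := KS_congr1 (rhoB m)
  rhoB2 m n := KS_congr2 (rhoB n)
  one1 m hm := by
    by_cases h : m % 8 = 2 ∨ m % 8 = 4
    · right; intro n; apply KS_congr1; intro k; omega
    · left; intro n; apply KS_congr1; intro k; omega
  one2 n hn := by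
    by_cases h : n % 8 = 2 ∨ n % 8 = 4
    · right; intro m; apply KS_congr2; intro k; omega
    · left; intro m; apply KS_congr2; intro k; omega

lemma reg_of (g : Grid) {A B : Set Cell}
    (h : ∀ C, IsCompOf C (g.R (FP A B)) → (∃! T, IsCompOf T (g.R (TP A B)) ∧ SharesEdge T C) ∧
      ∃! T, IsCompOf T (g.R (TN A B)) ∧ SharesEdge T C) : Reg A B where
  tp_ex s hs := g.touch_ex hs fun C hC => (h C hC).1
  tn_ex s hs := g.touch_ex hs fun C hC => (h C hC).2
  tp_un s hs p hp q hq h1 h2 := g.touch_un hs hp hq (fun C hC => (h C hC).1) h1 h2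
  tn_un s hs p hp q hq h1 h2 := g.touch_un hs hp hq (fun C hC => (h C hC).2) h1 h2

theorem main (h w : ℕ) (P G : Set (ℕ × ℕ)) (hP : OnGrid P h w) (hG : OnGrid G h w)
    (ε : ℝ) (hε0 : 0 < ε) (hε : ε < 1 / 4) (hzero : ZeroLoss P G ε) :
    SDR (thick ε (fg P)) (TPset P G ε) ∧
    SDR (thick (2 * ε) (fg G)) (TPset P G ε) ∧
    SDR (thick ε (fg P) ∪ thick (2 * ε) (fg G)) (thick ε (fg P)) ∧
    SDR (thick ε (fg P) ∪ thick (2 * ε) (fg G)) (thick (2 * ε) (fg G)) := by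
  obtain ⟨g, hg⟩ := exists_gridε hε0 hε
  have gd := good hP hG
  have hA := thickA hε0 g hg P
  have hB := thickB hε0 g hg G
  set A := KS P 6 4
  set B := KS G 8 6
  have eTP : TPset P G ε = g.R (TP A B) := by
    ext x; rw [Grid.mem_R, mem_TP, TPset, hA, hB]; rfl
  have eTN : TNset P G ε = g.R (TN A B) := by
    ext x; rw [Grid.mem_R, mem_TN, TNset, hA, hB]; rfl
  have eFP : FPset P G ε = g.R (FP A B) := by
    ext x; rw [Grid.mem_R, mem_FP, FPset, hA, hB]; rfl
  have eFN : FNset P G ε = g.R (FP B A) := by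
    ext x; rw [Grid.mem_R, mem_FP, FNset, hA, hB, and_comm]; rfl
  have sTP : TP B A = TP A B := by ext x; rw [mem_TP, mem_TP, and_comm]
  have sTN : TN B A = TN A B := by ext x; rw [mem_TN, mem_TN, and_comm]
  obtain ⟨z1, z2⟩ := hzero
  unfold RegularComp at z1 z2
  rw [eTP, eTN] at z1 z2
  rw [eFP] at z1
  rw [eFN, ← sTP, ← sTN] at z2
  have k1 := g.collapses_sdr gd.downA (collapses gd (reg_of g z1))
  have k2 := g.collapses_sdr gd.downB (collapses gd.swap (reg_of g z2))
  have cA := g.isClosed_R gd.downA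
  have cB := g.isClosed_R gd.downB
  have eT : TPset P G ε = g.R A ∩ g.R B := by rw [TPset, hA, hB]
  rw [eT, hA, hB]
  have k1' : SDR' (g.R A) (g.R A ∩ g.R B) := k1
  have k2' : SDR' (g.R B) (g.R B ∩ g.R A) := k2
  refine ⟨k1'.toSDR, ?_, ?_, (k1'.glue cA cB).toSDR⟩
  · rw [inter_comm]; exact k2'.toSDR
  · rw [union_comm]; exact (k2'.glue cB cA).toSDR

end ZL

/-- Under the zero-loss hypothesis, all four inclusions in the commutative
square `TP ↪ F_ε(P) ↪ F_ε(P) ∪ F_{2ε}(G)` and `TP ↪ F_{2ε}(G) ↪ F_ε(P) ∪ F_{2ε}(G)` are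
deformation retractions. -/
theorem zero_loss_deformation_retracts
    (h w : ℕ) (P G : Set (ℕ × ℕ)) (hP : OnGrid P h w) (hG : OnGrid G h w)
    (ε : ℝ) (hε0 : 0 < ε) (hε : ε < 1 / 4) (hzero : ZeroLoss P G ε) :
    SDR (thick ε (fg P)) (TPset P G ε) ∧
    SDR (thick (2 * ε) (fg G)) (TPset P G ε) ∧
    SDR (thick ε (fg P) ∪ thick (2 * ε) (fg G)) (thick ε (fg P)) ∧
    SDR (thick ε (fg P) ∪ thick (2 * ε) (fg G)) (thick (2 * ε) (fg G)) := by
  exact ZL.main h w P G hP hG ε hε0 hε hzero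

end
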